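/- arXiv:1001.2638 — 6 statements merged into one kernel-verified Lean document; each statement's English description precedes it below -/
import Mathlib

section
/- Let p be a prime with p ≡ 3 (mod 4). Then M(p) = Σ_{k=1}^{p-1} (k/p)·k < 0; that is, among the numbers 1, 2, …, p−1, the sum of the quadratic non-residues mod p is greater than the sum of the quadratic residues mod p. -/
open Complex Filter Topology in
lemma theta_lim (a : ℝ) {ι : Type*} {l : Filter ι} {τ : ι → ℂ} (h : Tendsto (fun i => (τ i).im) l atTop) :
    Tendsto (fun i => jacobiTheta₂ a (τ i)) l (𝓝 1) := by
  have hs := summable_pow_mul_jacobiTheta₂_term_bound 0 one_pos 0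
  have key : Tendsto (fun i => ∑' n : ℤ, jacobiTheta₂_term n a (τ i)) l (𝓝 (∑' n : ℤ, if n = 0 then (1:ℂ) else 0)) := by
    refine tendsto_tsum_of_dominated_convergence hs ?_ ?_
    · intro n
      by_cases hn : n = 0
      · subst hn; simpa [jacobiTheta₂_term] using tendsto_const_nhds
      · simp only [hn, if_false]
        rw [tendsto_zero_iff_norm_tendsto_zero]
        simp_rw [norm_jacobiTheta₂_term]
        simp only [ofReal_im, mul_zero, sub_zero]
        apply Real.tendsto_exp_atBot.comp
        have : -Real.pi * (n:ℝ)^2 < 0 := by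
          have : (0:ℝ) < (n:ℝ)^2 := by positivity
          nlinarith [Real.pi_pos]
        exact h.const_mul_atTop_of_neg this
    · filter_upwards [h.eventually_ge_atTop 1] with i hi n
      have := norm_jacobiTheta₂_term_le (S := 0) one_pos (z := a) (by simp) hi n
      simpa using this
  simpa [jacobiTheta₂] using key

open Complex in
lemma theta_shift (a : ℝ) {t : ℂ} (ht : 0 < t.im) :
    HasSum (fun n : ℤ => cexp (Real.pi * I * (n + a)^2 * t))
      (1 / (-I * t) ^ (1/2 : ℂ) * jacobiTheta₂ a (-1/t)) := by
  have ht0 : t ≠ 0 := by rintro rfl; simp at ht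
  have h := (hasSum_jacobiTheta₂_term (a * t) ht).mul_left (cexp (Real.pi * I * a^2 * t))
  rw [jacobiTheta₂_functional_equation] at h
  convert! h using 1
  · funext n
    rw [jacobiTheta₂_term, ← Complex.exp_add]
    congr 1; ring
  · have : cexp (Real.pi * I * a^2 * t) * cexp (-Real.pi * I * (a*t)^2/t) = 1 := by
      rw [← Complex.exp_add, ← Complex.exp_zero]
      congr 1; field_simp; ring
    rw [mul_div_cancel_right₀ _ ht0]
    linear_combination (-(1 / (-I * t) ^ (1/2 : ℂ) * jacobiTheta₂ a (-1/t))) * this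

open Complex in
lemma theta_split (N : ℕ) [NeZero N] (h : ℤ) {t : ℂ} (ht : 0 < t.im) :
    jacobiTheta₂ 0 (2 * h / N + t) = 1 / (-I * (N^2 * t)) ^ (1/2 : ℂ) *
      ∑ a : Fin N, cexp (2 * Real.pi * I * h * (a:ℕ)^2 / N) * jacobiTheta₂ ((((a:ℕ):ℝ) / N : ℝ)) (-1/(N^2*t)) := by
  have hN : (N:ℂ) ≠ 0 := by exact_mod_cast NeZero.ne N
  have him : 0 < ((N:ℂ)^2 * t).im := by
    have : ((N:ℂ)^2 * t).im = (N:ℝ)^2 * t.im := by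
      rw [← ofReal_natCast, ← ofReal_pow, im_ofReal_mul]
    rw [this]
    have : (0:ℝ) < N := by exact_mod_cast Nat.pos_of_ne_zero (NeZero.ne N)
    positivity
  have him2 : 0 < (2 * h / N + t).im := by
    have : (2 * h / N + t).im = t.im := by
      have : (2 * (h:ℂ) / N) = ((2 * h / N : ℝ) : ℂ) := by push_cast; rfl
      rw [add_im, this, ofReal_im, zero_add]
    rwa [this]
  have h1 := hasSum_jacobiTheta₂_term 0 him2
  have h2 := (Int.divModEquiv N).symm.hasSum_iff.mpr h1
  have h3 := (Equiv.prodComm (Fin N) ℤ).hasSum_iff.mpr h2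
  have h4 := h3.prod_fiberwise (g := fun a : Fin N => cexp (2 * Real.pi * I * h * (a:ℕ)^2 / N) *
    (1 / (-I * (N^2 * t)) ^ (1/2 : ℂ) * jacobiTheta₂ ((((a:ℕ):ℝ) / N : ℝ)) (-1/(N^2*t)))) ?_
  · rw [(hasSum_fintype _).unique h4 |>.symm, Finset.mul_sum]
    refine Finset.sum_congr rfl fun a _ => by ring
  · intro a
    convert! (theta_shift (((a:ℕ):ℝ) / N : ℝ) him).mul_left (cexp (2 * Real.pi * I * h * (a:ℕ)^2 / N)) using 1
    funext n
    simp only [Function.comp, Equiv.prodComm_apply, Prod.swap, Int.divModEquiv_symm_apply, jacobiTheta₂_term]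
    rw [← Complex.exp_add]
    refine Complex.exp_eq_exp_iff_exists_int.mpr ⟨h * (n^2 * N + 2 * n * (a:ℕ)), ?_⟩
    push_cast
    field_simp
    ring

open Complex in
lemma sqrt_mul_aux {d : ℝ} (hd : 0 < d) {z : ℂ} (hz : z ≠ 0) :
    ((d:ℂ) * z) ^ (1/2 : ℂ) = (d:ℂ)^(1/2:ℂ) * z ^ (1/2 : ℂ) := by
  have hd' : (d:ℂ) ≠ 0 := by exact_mod_cast hd.ne'
  rw [cpow_def_of_ne_zero (mul_ne_zero hd' hz), cpow_def_of_ne_zero hd', cpow_def_of_ne_zero hz,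
    log_ofReal_mul hd hz, ← Complex.exp_add, ofReal_log hd.le]
  congr 1; ring

open Complex Filter Topology in
lemma gauss_sum_sq (p : ℕ) (h3 : p % 4 = 3) :
    ∑ a : Fin p, cexp (2 * Real.pi * I * (a:ℕ)^2 / p) = I * Real.sqrt p := by
  have hp : 0 < p := by omega
  have : NeZero p := ⟨hp.ne'⟩
  have hpR : (0:ℝ) < p := by exact_mod_cast hp
  have hpC : (p:ℂ) ≠ 0 := by exact_mod_cast hp.ne'
  have hpC' : p ≠ 0 := hp.ne'
  let w : ℝ → ℂ := fun d => p/2 - I * d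
  have hwre : ∀ d, (w d).re = p/2 := by intro d; simp [w]
  have hw0 : ∀ d, w d ≠ 0 := by
    intro d h
    have := hwre d
    rw [h, zero_re] at this; linarith
  let T : ℝ → ℂ := fun d => 1 / w d - 2 / p
  have hT : ∀ d : ℝ, T d = I * d * (2 / p) / w d := by
    intro d
    have := hw0 d
    simp only [T]
    field_simp
    simp only [w]; ring
  let Sp : ℝ → ℂ := fun d => ∑ a : Fin p, cexp (2 * Real.pi * I * (1:ℤ) * (a:ℕ)^2 / p) *
    jacobiTheta₂ ((((a:ℕ):ℝ) / p : ℝ)) (-1/(p^2* T d))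
  let S4 : ℝ → ℂ := fun d => ∑ a : Fin 4, cexp (2 * Real.pi * I * ((-p:ℤ):ℂ) * (a:ℕ)^2 / (4:ℕ)) *
    jacobiTheta₂ ((((a:ℕ):ℝ) / (4:ℕ) : ℝ)) (-1/(((4:ℕ):ℂ)^2* (I * d)))
  have key : ∀ d : ℝ, 0 < d → 1 / (2 * p / w d) ^ (1/2:ℂ) * Sp d =
      1 / (-I / w d)^(1/2:ℂ) * (1 / (16:ℂ)^(1/2:ℂ) * S4 d) := by
    intro d hd
    have hdC : (d:ℂ) ≠ 0 := by exact_mod_cast hd.ne'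
    have hns : 0 < normSq (w d) := normSq_pos.mpr (hw0 d)
    have hTim : 0 < (T d).im := by
      have : (T d).im = d / normSq (w d) := by
        simp only [T, one_div, sub_im, inv_im]
        have : ((2:ℂ)/p).im = 0 := by
          have : ((2:ℂ)/p) = ((2/p : ℝ):ℂ) := by push_cast; rfl
          rw [this, ofReal_im]
        rw [this]; simp [w]
      rw [this]; positivity
    have e1 := theta_split p 1 hTim
    have e2 := theta_split 4 (-p) (t := I * d) (by simpa using hd)
    have e3 := jacobiTheta₂_functional_equation 0 (1 / w d)
    have a1 : 2 * ((1:ℤ):ℂ) / p + T d = 1 / w d := by simp only [T]; push_cast; ring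
    have a2 : 2 * ((-p:ℤ):ℂ) / (4:ℕ) + I * d = -1 / (1 / w d) := by
      have := hw0 d
      field_simp
      simp only [w]; push_cast; ring
    rw [a1] at e1
    rw [a2] at e2
    rw [zero_div, e2, e1] at e3
    have b1 : -I * (p^2 * T d) = d * (2 * p / w d) := by
      rw [hT]
      have := hw0 d
      field_simp
      linear_combination -I_sq
    have b2 : -I * (((4:ℕ):ℂ)^2 * (I * d)) = d * 16 := by
      push_cast
      linear_combination (-d * 16 : ℂ) * I_sq
    rw [b1, b2, sqrt_mul_aux hd (div_ne_zero (mul_ne_zero two_ne_zero hpC) (hw0 d)), sqrt_mul_aux hd (by norm_num)] at e3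
    have c1 : (d:ℂ)^(1/2:ℂ) ≠ 0 := by simp [cpow_eq_zero_iff, hdC]
    have c3 : -I * (1 / w d) = -I / w d := by ring
    rw [c3] at e3
    change 1 / ((d:ℂ)^(1/2:ℂ) * (2 * p / w d) ^ (1/2:ℂ)) * Sp d = 1 / (-I / w d)^(1/2:ℂ) * _ * (1 / ((d:ℂ)^(1/2:ℂ) * (16:ℂ)^(1/2:ℂ)) * S4 d) at e3
    have c2 : cexp (-Real.pi * I * 0 ^ 2 / (1 / w d)) = 1 := by simp
    rw [c2] at e3
    calc 1 / (2 * p / w d) ^ (1/2:ℂ) * Sp d = (d:ℂ)^(1/2:ℂ) * (1 / ((d:ℂ)^(1/2:ℂ) * (2 * p / w d) ^ (1/2:ℂ)) * Sp d) := by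
          generalize (d:ℂ)^(1/2:ℂ) = D at c1 ⊢; generalize (2 * p / w d) ^ (1/2:ℂ) = E; rw [← one_div_mul_one_div]; field_simp
      _ = _ := by
          rw [e3]; generalize (d:ℂ)^(1/2:ℂ) = D at c1 ⊢; rw [← one_div_mul_one_div]; field_simp
  -- limits
  have hwl : Tendsto w (𝓝[>] 0) (𝓝 (p/2)) := by
    have : Continuous w := by fun_prop
    have := this.tendsto 0
    simp only [w, ofReal_zero, mul_zero, sub_zero] at this
    exact this.mono_left nhdsWithin_le_nhds
  have hp2 : (p/2 : ℂ) ≠ 0 := by simp [hpC]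
  have hSp : Tendsto Sp (𝓝[>] 0) (𝓝 (∑ a : Fin p, cexp (2 * Real.pi * I * (1:ℤ) * (a:ℕ)^2 / p) * 1)) := by
    refine tendsto_finsetSum _ fun a _ => tendsto_const_nhds.mul (theta_lim _ ?_)
    have : ∀ d : ℝ, d ∈ Set.Ioi 0 → (-1 / ((p:ℂ)^2 * T d)).im = 1 / 4 * d⁻¹ := by
      intro d hd
      have hdC : (d:ℂ) ≠ 0 := by exact_mod_cast (ne_of_gt hd)
      have : (-1 / ((p:ℂ)^2 * T d)) = ((1/4 * d⁻¹ : ℝ) : ℂ) * I + ((1 / (2 * p) : ℝ) : ℂ) := by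
        rw [hT]
        have := hw0 d
        push_cast
        field_simp
        simp only [w]
        ring_nf
        simp only [I_sq]
        ring
      rw [this, add_im, ofReal_im, im_ofReal_mul, I_im]; ring
    refine Tendsto.congr' (f₁ := fun d : ℝ => 1/4 * d⁻¹) ?_ ?_
    · filter_upwards [self_mem_nhdsWithin] with d hd using (this d hd).symm
    · exact tendsto_inv_nhdsGT_zero.const_mul_atTop (by norm_num)
  have hS4 : Tendsto S4 (𝓝[>] 0) (𝓝 (∑ a : Fin 4, cexp (2 * Real.pi * I * ((-p:ℤ):ℂ) * (a:ℕ)^2 / (4:ℕ)) * 1)) := by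
    refine tendsto_finsetSum _ fun a _ => tendsto_const_nhds.mul (theta_lim _ ?_)
    have : ∀ d : ℝ, d ∈ Set.Ioi 0 → (-1/(((4:ℕ):ℂ)^2* (I * d))).im = 1 / 16 * d⁻¹ := by
      intro d hd
      have hdC : (d:ℂ) ≠ 0 := by exact_mod_cast (ne_of_gt hd)
      have : (-1/(((4:ℕ):ℂ)^2* (I * d))) = ((1/16 * d⁻¹ : ℝ) : ℂ) * I := by
        push_cast
        field_simp
        rw [I_sq]; norm_num
      rw [this, im_ofReal_mul, I_im]; ring
    refine Tendsto.congr' (f₁ := fun d : ℝ => 1/16 * d⁻¹) ?_ ?_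
    · filter_upwards [self_mem_nhdsWithin] with d hd using (this d hd).symm
    · exact tendsto_inv_nhdsGT_zero.const_mul_atTop (by norm_num)
  have q1 : (2 * p / (p/2 : ℂ)) = 2^(2:ℕ) := by field_simp
  have q2 : (-I / (p/2:ℂ)) = ((1 - I) / (Real.sqrt p : ℂ))^(2:ℕ) := by
    have : (Real.sqrt p : ℂ)^2 = p := by
      rw [← ofReal_pow, Real.sq_sqrt hpR.le, ofReal_natCast]
    rw [div_pow, this]
    field_simp
    linear_combination -I_sq
  have q3 : (16:ℂ) = 4^(2:ℕ) := by norm_num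
  have hsq : 0 < Real.sqrt p := Real.sqrt_pos.mpr hpR
  have r2 : 0 < ((1 - I) / (Real.sqrt p : ℂ)).re := by
    rw [div_ofReal_re]; simp [hp]
  have hL : Tendsto (fun d => (2 * p / w d) ^ (1/2:ℂ)) (𝓝[>] 0) (𝓝 2) := by
    have := (tendsto_const_nhds (x := (2 * p : ℂ))).div hwl hp2
    have h := (continuousAt_cpow_const (b := (1/2:ℂ)) (a := 2 * p / (p/2 : ℂ)) (by rw [q1]; norm_num [slitPlane])).tendsto.comp this
    rw [q1, one_div, sq_cpow_two_inv (by norm_num)] at h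
    simpa [Function.comp_def] using h
  have hR : Tendsto (fun d => (-I / w d) ^ (1/2:ℂ)) (𝓝[>] 0) (𝓝 ((1 - I) / (Real.sqrt p : ℂ))) := by
    have := (tendsto_const_nhds (x := (-I : ℂ))).div hwl hp2
    have h := (continuousAt_cpow_const (b := (1/2:ℂ)) (a := -I / (p/2 : ℂ)) (by
      right
      have : -I / (p/2:ℂ) = ((-(2/p) : ℝ) : ℂ) * I := by push_cast; field_simp
      rw [this, im_ofReal_mul, I_im]
      have : (0:ℝ) < 2 / p := by positivity
      linarith [this])).tendsto.comp this
    rw [q2, one_div, sq_cpow_two_inv r2] at h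
    simpa [Function.comp_def] using h
  have n2 : ((1 - I) / (Real.sqrt p : ℂ)) ≠ 0 := by
    intro h; rw [h] at r2; simp at r2
  have l1 := ((tendsto_const_nhds (x := (1:ℂ))).div hL (by norm_num)).mul hSp
  have l2 := ((tendsto_const_nhds (x := (1:ℂ))).div hR n2).mul (hS4.const_mul (1 / (16:ℂ)^(1/2:ℂ)))
  have l3 := l2.congr' (f₂ := fun d => 1 / (2 * p / w d) ^ (1/2:ℂ) * Sp d) (by
    filter_upwards [self_mem_nhdsWithin] with d hd using (key d hd).symm)
  have fin := tendsto_nhds_unique l1 l3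
  have q4 : (16:ℂ)^(1/2:ℂ) = 4 := by rw [q3, one_div, sq_cpow_two_inv (by norm_num)]
  obtain ⟨m, hm⟩ : ∃ m, p = 4 * m + 3 := ⟨p / 4, by omega⟩
  have f0 : cexp (Real.pi / 2 * I) = I := by simp
  have f1 : cexp (2 * Real.pi * I * ((-p:ℤ):ℂ) * ((1:ℕ):ℂ)^2 / (4:ℕ)) = I := by
    refine Eq.trans ?_ f0
    refine Complex.exp_eq_exp_iff_exists_int.mpr ⟨-m-1, ?_⟩
    rw [hm]; push_cast; ring
  have f2 : cexp (2 * Real.pi * I * ((-p:ℤ):ℂ) * ((2:ℕ):ℂ)^2 / (4:ℕ)) = 1 := by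
    refine Complex.exp_eq_one_iff.mpr ⟨-p, ?_⟩
    push_cast; ring
  have f3 : cexp (2 * Real.pi * I * ((-p:ℤ):ℂ) * ((3:ℕ):ℂ)^2 / (4:ℕ)) = I := by
    refine Eq.trans ?_ f0
    refine Complex.exp_eq_exp_iff_exists_int.mpr ⟨-9*m-7, ?_⟩
    rw [hm]; push_cast; ring
  have fs : (∑ a : Fin 4, cexp (2 * Real.pi * I * ((-p:ℤ):ℂ) * (a:ℕ)^2 / (4:ℕ)) * 1) = 2 + 2 * I := by
    simp only [mul_one, Fin.sum_univ_four]
    change cexp (2 * Real.pi * I * ((-p:ℤ):ℂ) * ((0:ℕ):ℂ)^2 / (4:ℕ)) + cexp (2 * Real.pi * I * ((-p:ℤ):ℂ) * ((1:ℕ):ℂ)^2 / (4:ℕ)) + cexp (2 * Real.pi * I * ((-p:ℤ):ℂ) * ((2:ℕ):ℂ)^2 / (4:ℕ)) + cexp (2 * Real.pi * I * ((-p:ℤ):ℂ) * ((3:ℕ):ℂ)^2 / (4:ℕ)) = _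
    rw [f1, f2, f3]; simp; ring
  rw [fs, q4] at fin
  simp only [Int.cast_one, mul_one] at fin
  have hsC : (Real.sqrt p : ℂ) ≠ 0 := by exact_mod_cast hsq.ne'
  have n3 : (1 - I) ≠ 0 := by intro h; apply n2; rw [h, zero_div]
  have n4 : 1 / ((1 - I) / (Real.sqrt p : ℂ)) = (1 + I) / 2 * Real.sqrt p := by
    field_simp
    linear_combination I_sq
  rw [n4] at fin
  linear_combination 2 * fin + (Real.sqrt p / 2 : ℂ) * I_sq

lemma zmod_sum (p : ℕ) [NeZero p] {M : Type*} [AddCommMonoid M] (g : ZMod p → M) :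
    ∑ x : ZMod p, g x = ∑ k ∈ Finset.range p, g (k : ZMod p) := by
  symm
  refine Finset.sum_nbij' (fun k => (k : ZMod p)) (fun x => x.val) ?_ ?_ ?_ ?_ ?_
  · intros; simp
  · intro x _; simpa using ZMod.val_lt x
  · intro k hk; exact ZMod.val_cast_of_lt (by simpa using hk)
  · intro x _; simp
  · intros; rfl

lemma leg_eq (p : ℕ) [Fact p.Prime] (n : ℕ) : legendreSym p (n:ℤ) = quadraticChar (ZMod p) (n : ZMod p) := by
  simp [legendreSym]

lemma leg_sum_zero (p : ℕ) [Fact p.Prime] (h3 : p % 4 = 3) :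
    ∑ k ∈ Finset.range p, legendreSym p (k:ℤ) = 0 := by
  simp_rw [leg_eq]
  rw [← zmod_sum p (fun x => quadraticChar (ZMod p) x)]
  exact quadraticChar_sum_zero (by rw [ZMod.ringChar_zmod_n]; omega)

open Complex in
lemma std_eq (p : ℕ) [NeZero p] (n : ℕ) : ZMod.stdAddChar (n : ZMod p) = cexp (2 * Real.pi * I * n / p) := by
  have := ZMod.stdAddChar_coe (N := p) (n:ℤ)
  push_cast at this
  exact this

open Complex in
lemma gauss_char (p : ℕ) [Fact p.Prime] (h3 : p % 4 = 3) :
    ∑ x : ZMod p, (quadraticChar (ZMod p) x : ℂ) * ZMod.stdAddChar x = I * Real.sqrt p := by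
  classical
  rw [← gauss_sum_sq p h3]
  have hp2 : ringChar (ZMod p) ≠ 2 := by rw [ZMod.ringChar_zmod_n]; omega
  have e1 : ∑ a : Fin p, cexp (2 * Real.pi * I * (a:ℕ)^2 / p) = ∑ x : ZMod p, ZMod.stdAddChar (x^2) := by
    rw [Fin.sum_univ_eq_sum_range (fun a => cexp (2 * Real.pi * I * (a:ℕ)^2 / p)), zmod_sum]
    refine Finset.sum_congr rfl fun k _ => ?_
    have := std_eq p (k^2)
    push_cast at this
    exact this.symm
  have e2 : ∑ x : ZMod p, ZMod.stdAddChar (x^2) = ∑ b : ZMod p, ((quadraticChar (ZMod p) b : ℂ) + 1) * ZMod.stdAddChar b := by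
    rw [← Finset.sum_fiberwise' Finset.univ (fun x : ZMod p => x^2) (fun b => ZMod.stdAddChar b)]
    refine Finset.sum_congr rfl fun b _ => ?_
    rw [Finset.sum_const, nsmul_eq_mul]
    congr 1
    have := quadraticChar_card_sqrts hp2 b
    have h2 : ((quadraticChar (ZMod p) b + 1 : ℤ) : ℂ) = (quadraticChar (ZMod p) b : ℂ) + 1 := by push_cast; rfl
    rw [← h2, ← this, Int.cast_natCast]
    congr 2
    ext x; simp
  have e3 : ∑ b : ZMod p, (ZMod.stdAddChar b : ℂ) = 0 := by
    apply AddChar.sum_eq_zero_of_ne_one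
    intro h
    have h1 : (ZMod.stdAddChar (1 : ZMod p) : ℂ) = ZMod.stdAddChar (0 : ZMod p) := by rw [h]; simp
    exact one_ne_zero (ZMod.injective_stdAddChar h1)
  rw [e1, e2]
  simp_rw [add_mul, one_mul]
  rw [Finset.sum_add_distrib, e3, add_zero]

open Complex in
lemma char_sum (p : ℕ) [Fact p.Prime] (h3 : p % 4 = 3) (n : ℕ) :
    ∑ k ∈ Finset.range p, (legendreSym p (k:ℤ) : ℂ) * cexp (2 * Real.pi * I * k / p) ^ n =
      legendreSym p (n:ℤ) * (I * Real.sqrt p) := by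
  have e1 : ∑ k ∈ Finset.range p, (legendreSym p (k:ℤ) : ℂ) * cexp (2 * Real.pi * I * k / p) ^ n
      = ∑ x : ZMod p, (quadraticChar (ZMod p) x : ℂ) * ZMod.stdAddChar ((n : ZMod p) * x) := by
    rw [zmod_sum]
    refine Finset.sum_congr rfl fun k _ => ?_
    rw [leg_eq, ← std_eq, ← Nat.cast_mul, std_eq, std_eq, ← Complex.exp_nat_mul]
    congr 2; push_cast; ring
  rw [e1]
  by_cases hn : (n : ZMod p) = 0
  · rw [leg_eq, hn]
    simp only [zero_mul, AddChar.map_zero_eq_one, mul_one, quadraticChar_zero, Int.cast_zero]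
    rw [← Int.cast_sum, quadraticChar_sum_zero (by rw [ZMod.ringChar_zmod_n]; omega), Int.cast_zero]
  · rw [← gauss_char p h3, Finset.mul_sum, leg_eq]
    refine Fintype.sum_bijective (fun x => (n : ZMod p) * x) (mulLeft_bijective₀ _ hn) _ _ fun x => ?_
    have h1 := quadraticChar_sq_one hn
    have h2 : quadraticChar (ZMod p) ((n : ZMod p) * x) = quadraticChar (ZMod p) n * quadraticChar (ZMod p) x := map_mul _ _ _
    have h3 : (quadraticChar (ZMod p) n : ℂ)^2 = 1 := by exact_mod_cast h1
    rw [h2]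
    push_cast
    linear_combination (-(quadraticChar (ZMod p) x : ℂ) * ZMod.stdAddChar ((n : ZMod p) * x)) * h3

open Complex Filter Topology in
lemma arg_aux {θ : ℝ} (h0 : 0 < θ) (h1 : θ < 2 * Real.pi) :
    (Complex.log (1 - cexp (θ * I))).im = θ / 2 - Real.pi / 2 ∧ 1 - cexp (θ * I) ∈ slitPlane := by
  have hs : 0 < 2 * Real.sin (θ/2) := by
    have := Real.sin_pos_of_pos_of_lt_pi (x := θ/2) (by linarith) (by linarith)
    linarith
  have e : 1 - cexp (θ * I) = ((2 * Real.sin (θ/2) : ℝ) : ℂ) *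
      (Complex.cos ((θ/2 - Real.pi/2 : ℝ) : ℂ) + Complex.sin ((θ/2 - Real.pi/2 : ℝ):ℂ) * I) := by
    rw [← ofReal_cos, ← ofReal_sin, Real.cos_sub_pi_div_two, Real.sin_sub_pi_div_two, exp_mul_I,
      ← ofReal_cos, ← ofReal_sin]
    have c : Real.cos θ = 1 - 2 * Real.sin (θ/2)^2 := by
      have := Real.cos_sq' (θ/2)
      have h := Real.cos_two_mul (θ/2)
      rw [show 2 * (θ/2) = θ by ring] at h
      rw [h, this]; ring
    have s : Real.sin θ = 2 * Real.sin (θ/2) * Real.cos (θ/2) := by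
      have h := Real.sin_two_mul (θ/2)
      rwa [show 2 * (θ/2) = θ by ring] at h
    rw [c, s]; push_cast; ring
  constructor
  · rw [log_im, e, arg_mul_cos_add_sin_mul_I hs]
    constructor <;> linarith [Real.pi_pos]
  · left
    have : (1 - cexp (θ * I)).re = 2 * Real.sin (θ/2)^2 := by
      rw [e, re_ofReal_mul, ← ofReal_cos, ← ofReal_sin, Real.cos_sub_pi_div_two, add_re, ofReal_re,
        re_ofReal_mul, I_re]
      ring
    rw [this]
    have : 0 < Real.sin (θ/2) := by linarith
    positivity

open Complex Filter Topology in
lemma log_formula (p : ℕ) [Fact p.Prime] (h3 : p % 4 = 3) {l : ℝ}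
    (hl : Tendsto (fun N => ∑ i ∈ Finset.range N, (legendreSym p (i:ℤ) : ℝ) / i) atTop (𝓝 l)) :
    Real.sqrt p * l = -(Real.pi / p) * ∑ k ∈ Finset.range p, (legendreSym p (k:ℤ) : ℝ) * k +
      Real.pi / 2 * ∑ k ∈ Finset.range p, (legendreSym p (k:ℤ) : ℝ) := by
  have hp : 0 < p := by omega
  have hpR : (0:ℝ) < p := by exact_mod_cast hp
  let ζ : ℕ → ℂ := fun k => cexp (2 * Real.pi * I * k / p)
  have hζ : ∀ k, ζ k = cexp (((2 * Real.pi * k / p : ℝ) : ℂ) * I) := by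
    intro k; simp only [ζ]; congr 1; push_cast; ring
  have hζn : ∀ k, ‖ζ k‖ = 1 := by intro k; rw [hζ, norm_exp_ofReal_mul_I]
  have hlC : Tendsto (fun N => ∑ i ∈ Finset.range N, (legendreSym p (i:ℤ) : ℂ) / i) atTop (𝓝 (l:ℂ)) := by
    have := (continuous_ofReal.tendsto l).comp hl
    refine this.congr fun N => ?_
    simp
  have A := (Complex.tendsto_tsum_powerSeries_nhdsWithin_lt hlC)
  rw [tendsto_map'_iff] at A
  have B : ∀ r : ℝ, r ∈ Set.Ioo (0:ℝ) 1 → (I * Real.sqrt p) * ∑' n : ℕ, (legendreSym p (n:ℤ) : ℂ) / n * (r:ℂ) ^ n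
      = ∑ k ∈ Finset.range p, (legendreSym p (k:ℤ) : ℂ) * -Complex.log (1 - r * ζ k) := by
    intro r hr
    rw [← tsum_mul_left]
    refine HasSum.tsum_eq ?_
    have : HasSum (fun n : ℕ => ∑ k ∈ Finset.range p, (legendreSym p (k:ℤ) : ℂ) * ((r * ζ k)^n / n)) (∑ k ∈ Finset.range p, (legendreSym p (k:ℤ) : ℂ) * -Complex.log (1 - r * ζ k)) := by
      refine hasSum_sum fun k _ => (Complex.hasSum_taylorSeries_neg_log ?_).mul_left _
      rw [norm_mul, hζn, mul_one, norm_real, Real.norm_of_nonneg hr.1.le]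
      exact hr.2
    convert! this using 1
    funext n
    have h := char_sum p h3 n
    calc I * Real.sqrt p * ((legendreSym p (n:ℤ) : ℂ) / n * (r:ℂ) ^ n)
        = ((legendreSym p (n:ℤ) : ℂ) * (I * Real.sqrt p)) * ((r:ℂ)^n / n) := by ring
      _ = _ := by
        rw [← h, Finset.sum_mul]
        refine Finset.sum_congr rfl fun k _ => ?_
        simp only [ζ, mul_pow]; ring
  have C : Tendsto (fun r : ℝ => ∑ k ∈ Finset.range p, (legendreSym p (k:ℤ) : ℂ) * -Complex.log (1 - r * ζ k)) (𝓝[<] 1)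
      (𝓝 (∑ k ∈ Finset.range p, (legendreSym p (k:ℤ) : ℂ) * -Complex.log (1 - ζ k))) := by
    refine tendsto_finsetSum _ fun k hk => ?_
    by_cases hk0 : k = 0
    · subst hk0; simp
    · refine Tendsto.const_mul _ (Tendsto.neg ?_)
      have hk' : k < p := by simpa using hk
      have hkR : (0:ℝ) < k := by exact_mod_cast Nat.pos_of_ne_zero hk0
      have hkp : (k:ℝ) < p := by exact_mod_cast hk'
      have sl := (arg_aux (θ := 2 * Real.pi * k / p) (by positivity) (by
        rw [div_lt_iff₀ hpR]; nlinarith [Real.pi_pos])).2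
      rw [← hζ] at sl
      have : ContinuousAt (fun r : ℝ => Complex.log (1 - r * ζ k)) 1 := by
        refine ContinuousAt.clog (by fun_prop) (by simpa using sl)
      have := this.tendsto
      simp only [ofReal_one, one_mul] at this
      exact this.mono_left nhdsWithin_le_nhds
  have D := tendsto_nhds_unique ((A.const_mul (I * Real.sqrt p)).congr' (by
    filter_upwards [Ioo_mem_nhdsLT (zero_lt_one (α := ℝ))] with r hr using B r hr)) C
  have E := congrArg Complex.im D
  have E1 : (I * Real.sqrt p * l).im = Real.sqrt p * l := by
    rw [show I * Real.sqrt p * l = ((Real.sqrt p * l : ℝ) : ℂ) * I by push_cast; ring, im_ofReal_mul]; simp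
  rw [E1, im_sum] at E
  rw [E, Finset.mul_sum, Finset.mul_sum, ← Finset.sum_add_distrib]
  refine Finset.sum_congr rfl fun k hk => ?_
  by_cases hk0 : k = 0
  · subst hk0; simp
  have hk' : k < p := by simpa using hk
  have hkR : (0:ℝ) < k := by exact_mod_cast Nat.pos_of_ne_zero hk0
  have hkp : (k:ℝ) < p := by exact_mod_cast hk'
  have sl := (arg_aux (θ := 2 * Real.pi * k / p) (by positivity) (by
        rw [div_lt_iff₀ hpR]; nlinarith [Real.pi_pos])).1
  rw [← hζ] at sl
  rw [← ofReal_intCast, im_ofReal_mul, neg_im, sl]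
  field_simp
  ring

lemma leg_abs (p : ℕ) [Fact p.Prime] (n : ℕ) : |(legendreSym p (n:ℤ) : ℝ)| ≤ 1 := by
  by_cases h : ((n:ℤ) : ZMod p) = 0
  · rw [(legendreSym.eq_zero_iff p _).2 h]; simp
  · rcases legendreSym.eq_one_or_neg_one p h with h | h <;> rw [h] <;> simp

lemma leg_zero (p : ℕ) [Fact p.Prime] : (legendreSym p ((0:ℕ):ℤ) : ℝ) = 0 := by
  simp

lemma leg_period (p : ℕ) [Fact p.Prime] (m j : ℕ) :
    legendreSym p ((p * m + j : ℕ) : ℤ) = legendreSym p (j : ℤ) := by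
  rw [leg_eq, leg_eq]; simp

lemma sum_blocks (p N : ℕ) (f : ℕ → ℝ) :
    ∑ i ∈ Finset.range (p * N), f i = ∑ m ∈ Finset.range N, ∑ j ∈ Finset.range p, f (p * m + j) := by
  induction N with
  | zero => simp
  | succ N ih => rw [Nat.mul_succ, Finset.sum_range_add, ih, Finset.sum_range_succ]

lemma leg_sum_zeroR (p : ℕ) [Fact p.Prime] (h3 : p % 4 = 3) :
    ∑ k ∈ Finset.range p, (legendreSym p (k:ℤ) : ℝ) = 0 := by
  exact_mod_cast leg_sum_zero p h3

lemma leg_partial (p : ℕ) [Fact p.Prime] (h3 : p % 4 = 3) (N : ℕ) :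
    ‖∑ k ∈ Finset.range N, (legendreSym p (k:ℤ) : ℝ)‖ ≤ p := by
  have hp : 0 < p := by omega
  rw [← Nat.div_add_mod N p, Finset.sum_range_add, sum_blocks]
  simp_rw [leg_period, leg_sum_zeroR p h3]
  simp only [Finset.sum_const_zero, zero_add]
  refine (norm_sum_le_of_le _ (fun k _ => leg_abs p k)).trans ?_
  simp only [Finset.sum_const, Finset.card_range, nsmul_eq_mul, mul_one]
  exact_mod_cast (Nat.mod_lt N hp).le

open Filter Topology in
lemma leg_lim_exists (p : ℕ) [Fact p.Prime] (h3 : p % 4 = 3) :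
    ∃ l : ℝ, Tendsto (fun N => ∑ i ∈ Finset.range N, (legendreSym p (i:ℤ) : ℝ) / i) atTop (𝓝 l) := by
  have ha : Antitone (fun n : ℕ => (max (n:ℝ) 1)⁻¹) := by
    intro a b hab
    have : (a:ℝ) ≤ b := by exact_mod_cast hab
    refine inv_anti₀ (by positivity) (max_le_max this le_rfl)
  have h0 : Tendsto (fun n : ℕ => (max (n:ℝ) 1)⁻¹) atTop (𝓝 0) := by
    refine Tendsto.inv_tendsto_atTop ?_
    exact tendsto_atTop_mono (fun n => le_max_left _ _) tendsto_natCast_atTop_atTop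
  have := ha.cauchySeq_series_mul_of_tendsto_zero_of_bounded h0 (leg_partial p h3)
  obtain ⟨l, hl⟩ := cauchySeq_tendsto_of_complete this
  refine ⟨l, hl.congr fun N => Finset.sum_congr rfl fun i _ => ?_⟩
  rcases Nat.eq_zero_or_pos i with rfl | hi
  · simp
  · have : (1:ℝ) ≤ i := by exact_mod_cast hi
    rw [max_eq_left this, smul_eq_mul, div_eq_mul_inv, mul_comm]

lemma rpow_diff {x y s : ℝ} (hx : 1 ≤ x) (hxy : x ≤ y) (h1 : 1 ≤ s) (h2 : s ≤ 2) :
    |y ^ (-s) - x ^ (-s)| ≤ 2 * (y - x) / x ^ 2 := by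
  have hx0 : 0 < x := by linarith
  have hy0 : 0 < y := by linarith
  have hm : y ^ (-s) ≤ x ^ (-s) := Real.rpow_le_rpow_of_nonpos hx0 hxy (by linarith)
  rw [abs_of_nonpos (by linarith)]
  have b := one_add_mul_self_le_rpow_one_add (s := x / y - 1) (by have : 0 < x / y := by positivity
                                                                  linarith) h1
  rw [show 1 + (x / y - 1) = x / y by ring, Real.div_rpow hx0.le hy0.le] at b
  have e : y ^ (-s) = x ^ (-s) * (x ^ s / y ^ s) := by
    rw [Real.rpow_neg hx0.le, Real.rpow_neg hy0.le]
    have := (Real.rpow_pos_of_pos hx0 s).ne'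
    field_simp
  have hxs : x ^ (-s) ≤ x⁻¹ := by
    rw [← Real.rpow_neg_one]
    exact Real.rpow_le_rpow_of_exponent_le hx (by linarith)
  have hxs0 : 0 < x ^ (-s) := Real.rpow_pos_of_pos hx0 _
  have hq : (y - x) / y ≤ (y - x) / x := div_le_div_of_nonneg_left (by linarith) hx0 hxy
  have hq0 : 0 ≤ (y - x) / y := div_nonneg (by linarith) hy0.le
  calc -(y ^ (-s) - x ^ (-s)) = x ^ (-s) * (1 - x ^ s / y ^ s) := by rw [e]; ring
    _ ≤ x ^ (-s) * (s * ((y - x) / y)) := by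
      refine mul_le_mul_of_nonneg_left ?_ hxs0.le
      have : (y - x) / y = 1 - x / y := by field_simp
      rw [this]; linarith
    _ ≤ x⁻¹ * (2 * ((y - x) / x)) := by
      refine mul_le_mul hxs ?_ (by positivity) (by positivity)
      exact mul_le_mul h2 hq hq0 (by norm_num)
    _ = _ := by field_simp

noncomputable def blk (p : ℕ) [Fact p.Prime] (s : ℝ) (m : ℕ) : ℝ :=
  ∑ j ∈ Finset.range p, (legendreSym p (j:ℤ) : ℝ) * ((p * m + j : ℕ) : ℝ) ^ (-s)

noncomputable def blkBound (p m : ℕ) : ℝ := 2 * (1 / (m:ℝ) ^ 2) + if m = 0 then (p:ℝ) else 0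

lemma blkBound_summable (p : ℕ) : Summable (blkBound p) := by
  refine Summable.add ((Real.summable_one_div_nat_pow.2 (by norm_num)).mul_left 2) ?_
  exact (hasSum_ite_eq 0 (p:ℝ)).summable

lemma blk_le (p : ℕ) [Fact p.Prime] (h3 : p % 4 = 3) {s : ℝ} (h1 : 1 ≤ s) (h2 : s ≤ 2) (m : ℕ) :
    ‖blk p s m‖ ≤ blkBound p m := by
  have hp : 0 < p := by omega
  have hpR : (1:ℝ) ≤ p := by exact_mod_cast hp
  unfold blkBound
  rcases Nat.eq_zero_or_pos m with rfl | hm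
  · simp only [blk]
    have : ∀ j ∈ Finset.range p, ‖(legendreSym p (j:ℤ) : ℝ) * ((p * 0 + j : ℕ) : ℝ) ^ (-s)‖ ≤ 1 := by
      intro j _
      rcases Nat.eq_zero_or_pos j with rfl | hj
      · simp
      · rw [norm_mul]
        refine mul_le_one₀ (leg_abs p j) (norm_nonneg _) ?_
        have hj1 : (1:ℝ) ≤ ((p * 0 + j : ℕ) : ℝ) := by
          rw [mul_zero, zero_add]; exact_mod_cast hj
        rw [Real.norm_of_nonneg (Real.rpow_nonneg (by linarith) _)]
        exact Real.rpow_le_one_of_one_le_of_nonpos hj1 (by linarith)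
    refine (norm_sum_le_of_le _ this).trans ?_
    simp
  · have hmR : (1:ℝ) ≤ m := by exact_mod_cast hm
    have hm0 : m ≠ 0 := hm.ne'
    rw [if_neg hm0, add_zero]
    have hz := leg_sum_zeroR p h3
    have e : blk p s m = ∑ j ∈ Finset.range p, (legendreSym p (j:ℤ) : ℝ) *
        (((p * m + j : ℕ) : ℝ) ^ (-s) - ((p * m : ℕ) : ℝ) ^ (-s)) := by
      simp_rw [mul_sub]
      rw [Finset.sum_sub_distrib, ← Finset.sum_mul, hz]
      simp [blk]
    rw [e]
    have : ∀ j ∈ Finset.range p, ‖(legendreSym p (j:ℤ) : ℝ) *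
        (((p * m + j : ℕ) : ℝ) ^ (-s) - ((p * m : ℕ) : ℝ) ^ (-s))‖ ≤ 2 * p / (p * m) ^ 2 := by
      intro j hj
      have hj' : (j:ℝ) ≤ p := by
        have : j < p := by simpa using hj
        exact_mod_cast this.le
      rw [norm_mul]
      have hx : (1:ℝ) ≤ ((p * m : ℕ) : ℝ) := by exact_mod_cast Nat.mul_pos hp hm
      have d := rpow_diff (x := ((p * m : ℕ) : ℝ)) (y := ((p * m + j : ℕ) : ℝ)) hx
        (by push_cast; linarith [(Nat.cast_nonneg j : (0:ℝ) ≤ j)]) h1 h2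
      refine (mul_le_of_le_one_left (norm_nonneg _) (leg_abs p j)).trans (d.trans ?_)
      push_cast
      have : (p * m + j - p * m : ℝ) = j := by ring
      rw [this]
      gcongr
    refine (norm_sum_le_of_le _ this).trans ?_
    simp only [Finset.sum_const, Finset.card_range, nsmul_eq_mul]
    apply le_of_eq
    field_simp

open Filter Topology in
lemma blk_tsum (p : ℕ) [Fact p.Prime] (h3 : p % 4 = 3) {s : ℝ} (h1 : 1 ≤ s) (h2 : s ≤ 2) {L : ℝ}
    (h : Tendsto (fun N => ∑ i ∈ Finset.range N, (legendreSym p (i:ℤ) : ℝ) * (i:ℝ) ^ (-s)) atTop (𝓝 L)) :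
    ∑' m, blk p s m = L := by
  have hs : Summable (blk p s) := Summable.of_norm_bounded (blkBound_summable p) (blk_le p h3 h1 h2)
  have t1 := hs.hasSum.tendsto_sum_nat
  have t2 := h.comp (tendsto_id.const_mul_atTop' (show 0 < p by omega) : Tendsto (fun N => p * N) atTop atTop)
  refine tendsto_nhds_unique t1 (t2.congr fun N => ?_)
  simp only [Function.comp]
  rw [sum_blocks]
  simp_rw [leg_period]
  rfl

open Filter Topology in
lemma Ls_nonneg (p : ℕ) [Fact p.Prime] {s : ℝ} (h1 : 1 < s) :
    ∃ L : ℝ, 0 ≤ L ∧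
     Tendsto (fun N => ∑ i ∈ Finset.range N, (legendreSym p (i:ℤ) : ℝ) * (i:ℝ) ^ (-s)) atTop (𝓝 L) := by
  let f : ℕ →*₀ ℝ :=
    { toFun := fun n => (legendreSym p (n:ℤ) : ℝ) * (n:ℝ) ^ (-s)
      map_zero' := by simp
      map_one' := by simp
      map_mul' := by
        intro a b
        push_cast
        rw [legendreSym.mul, Real.mul_rpow (by positivity) (by positivity)]
        push_cast
        ring }
  have hf : ∀ n, f n = (legendreSym p (n:ℤ) : ℝ) * (n:ℝ) ^ (-s) := fun n => rfl
  have hle : ∀ n, ‖f n‖ ≤ (n:ℝ) ^ (-s) := by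
    intro n
    have h0 : 0 ≤ (n:ℝ) ^ (-s) := by positivity
    rw [hf, norm_mul, Real.norm_of_nonneg h0]
    exact mul_le_of_le_one_left h0 (leg_abs p n)
  have hsum : Summable (fun n => ‖f n‖) :=
    Summable.of_nonneg_of_le (fun _ => norm_nonneg _) hle (Real.summable_nat_rpow.2 (by linarith))
  have hE := EulerProduct.eulerProduct_completely_multiplicative hsum
  refine ⟨∑' n, f n, ?_, ?_⟩
  · refine ge_of_tendsto' hE fun N => Finset.prod_nonneg fun q hq => inv_nonneg.2 ?_
    have hq1 : (1:ℝ) ≤ q := by exact_mod_cast (Nat.prime_of_mem_primesBelow hq).one_lt.le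
    have := (le_abs_self _).trans ((hle q).trans (Real.rpow_le_one_of_one_le_of_nonpos hq1 (by linarith)))
    linarith
  · exact hsum.of_norm.hasSum.tendsto_sum_nat

open Filter Topology in
lemma l_nonneg (p : ℕ) [Fact p.Prime] (h3 : p % 4 = 3) {l : ℝ}
    (hl : Tendsto (fun N => ∑ i ∈ Finset.range N, (legendreSym p (i:ℤ) : ℝ) / i) atTop (𝓝 l)) :
    0 ≤ l := by
  have e1 : ∑' m, blk p 1 m = l := by
    refine blk_tsum p h3 le_rfl (by norm_num) (hl.congr fun N => Finset.sum_congr rfl fun i _ => ?_)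
    rw [Real.rpow_neg_one, div_eq_mul_inv]
  have hmem : Set.Ioc (1:ℝ) 2 ∈ 𝓝[>] (1:ℝ) := Ioc_mem_nhdsGT (by norm_num)
  have T : Tendsto (fun s => ∑' m, blk p s m) (𝓝[>] (1:ℝ)) (𝓝 (∑' m, blk p 1 m)) := by
    refine tendsto_tsum_of_dominated_convergence (blkBound_summable p) ?_ ?_
    · intro m
      refine Tendsto.mono_left ?_ nhdsWithin_le_nhds
      unfold blk
      refine tendsto_finsetSum _ fun j _ => ?_
      by_cases h : p * m + j = 0
      · have : j = 0 := by omega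
        subst this; simp
      · have h' : ((p * m + j : ℕ) : ℝ) ≠ 0 := by exact_mod_cast h
        refine Tendsto.const_mul _ ?_
        have : ContinuousAt (fun s : ℝ => ((p * m + j : ℕ) : ℝ) ^ (-s)) 1 :=
          ContinuousAt.rpow continuousAt_const continuousAt_neg (Or.inl h')
        exact this.tendsto
    · filter_upwards [hmem] with s hs m using blk_le p h3 hs.1.le hs.2 m
  rw [← e1]
  refine ge_of_tendsto T ?_
  filter_upwards [hmem] with s hs
  obtain ⟨L, hL, hT⟩ := Ls_nonneg p hs.1
  rw [blk_tsum p h3 hs.1.le hs.2 hT]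
  exact hL

lemma M_le (p : ℕ) [Fact p.Prime] (h3 : p % 4 = 3) :
    ∑ k ∈ Finset.range p, legendreSym p (k:ℤ) * (k:ℤ) ≤ 0 := by
  obtain ⟨l, hl⟩ := leg_lim_exists p h3
  have h := log_formula p h3 hl
  have h0 := l_nonneg p h3 hl
  rw [leg_sum_zeroR p h3, mul_zero, add_zero] at h
  have hpR : (0:ℝ) < p := by
    have : 0 < p := by omega
    exact_mod_cast this
  have hc : 0 < Real.pi / p := by positivity
  have h1 : 0 ≤ Real.sqrt p * l := by positivity
  have h2 : ∑ k ∈ Finset.range p, (legendreSym p (k:ℤ) : ℝ) * k ≤ 0 := by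
    by_contra hh
    push Not at hh
    have := mul_pos hc hh
    linarith
  exact_mod_cast h2

lemma leg_pm (p : ℕ) [Fact p.Prime] {k : ℕ} (hk : k ∈ Finset.Icc 1 (p - 1)) :
    ((k:ℤ) : ZMod p) ≠ 0 := by
  rw [Finset.mem_Icc] at hk
  intro h
  have h' : ((k:ℕ) : ZMod p) = 0 := by exact_mod_cast h
  rw [ZMod.natCast_eq_zero_iff] at h'
  have := Nat.le_of_dvd (by omega) h'
  omega

lemma leg_iff (p : ℕ) [Fact p.Prime] {k : ℕ} (hk : k ∈ Finset.Icc 1 (p - 1)) :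
    (∃ x ∈ Finset.range p, x * x % p = k % p) ↔ legendreSym p (k:ℤ) = 1 := by
  rw [legendreSym.eq_one_iff p (leg_pm p hk)]
  constructor
  · rintro ⟨x, _, hx⟩
    refine ⟨(x : ZMod p), ?_⟩
    have := (ZMod.natCast_eq_natCast_iff (x * x) k p).2 hx
    push_cast at this ⊢
    exact this.symm
  · rintro ⟨y, hy⟩
    refine ⟨y.val, by simpa using ZMod.val_lt y, ?_⟩
    refine (ZMod.natCast_eq_natCast_iff (y.val * y.val) k p).1 ?_
    push_cast at hy ⊢
    rw [ZMod.natCast_zmod_val, hy]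

lemma M_icc (p : ℕ) [Fact p.Prime] (h3 : p % 4 = 3) :
    ∑ k ∈ Finset.range p, legendreSym p (k:ℤ) * (k:ℤ) =
     ∑ k ∈ Finset.Icc 1 (p - 1), legendreSym p (k : ℤ) * (k : ℤ) := by
  symm
  refine Finset.sum_subset ?_ ?_
  · intro k hk; simp only [Finset.mem_Icc, Finset.mem_range] at *; omega
  · intro k hk hk'
    simp only [Finset.mem_Icc, Finset.mem_range] at *
    have : k = 0 := by omega
    subst this; simp

lemma M_odd (p : ℕ) [Fact p.Prime] (h3 : p % 4 = 3) :
    ∑ k ∈ Finset.Icc 1 (p - 1), legendreSym p (k : ℤ) * (k : ℤ) ≠ 0 := by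
  intro h
  have h1 : ∀ k ∈ Finset.Icc 1 (p - 1),
      ((legendreSym p (k : ℤ) * (k : ℤ) : ℤ) : ZMod 2) = ((k : ℕ) : ZMod 2) := by
    intro k hk
    rcases legendreSym.eq_one_or_neg_one p (leg_pm p hk) with e | e <;> rw [e] <;> push_cast
    · ring
    · rw [ZMod.neg_eq_self_mod_two]; ring
  have h2 := congrArg (fun z : ℤ => (z : ZMod 2)) h
  simp only [Int.cast_sum, Int.cast_zero] at h2
  rw [Finset.sum_congr rfl h1, ← Nat.cast_sum, ZMod.natCast_eq_zero_iff] at h2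
  have h4 : ∑ k ∈ Finset.Icc 1 (p - 1), k = ∑ k ∈ Finset.range p, k := by
    refine Finset.sum_subset ?_ ?_
    · intro k hk; simp only [Finset.mem_Icc, Finset.mem_range] at *; omega
    · intro k hk hk'
      simp only [Finset.mem_Icc, Finset.mem_range] at *
      omega
  have h5 := Finset.sum_range_id_mul_two p
  rw [h4] at h2
  obtain ⟨c, hc⟩ := h2
  obtain ⟨q, hq⟩ : ∃ q, p = 4 * q + 3 := ⟨p / 4, by omega⟩
  rw [hc, hq, show 4 * q + 3 - 1 = 4 * q + 2 by omega] at h5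
  have : 2 * c = 2 * (4 * q * q + 5 * q + 1) + 1 := by nlinarith
  omega

theorem M_neg (p : ℕ) [Fact p.Prime] (h3 : p % 4 = 3) :
    (∑ k ∈ Finset.Icc 1 (p - 1), legendreSym p (k : ℤ) * (k : ℤ)) < 0 ∧
    (∑ k ∈ (Finset.Icc 1 (p - 1)).filter
        (fun k => ¬ ∃ x ∈ Finset.range p, x * x % p = k % p), k) >
      (∑ k ∈ (Finset.Icc 1 (p - 1)).filter
        (fun k => ∃ x ∈ Finset.range p, x * x % p = k % p), k) := by
  have hM : (∑ k ∈ Finset.Icc 1 (p - 1), legendreSym p (k : ℤ) * (k : ℤ)) < 0 :=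
    lt_of_le_of_ne (M_icc p h3 ▸ M_le p h3) (M_odd p h3)
  refine ⟨hM, ?_⟩
  rw [← Finset.sum_filter_add_sum_filter_not (Finset.Icc 1 (p - 1))
    (fun k => ∃ x ∈ Finset.range p, x * x % p = k % p)] at hM
  have e1 : ∑ k ∈ (Finset.Icc 1 (p - 1)).filter (fun k => ∃ x ∈ Finset.range p, x * x % p = k % p),
      legendreSym p (k : ℤ) * (k : ℤ) =
      ∑ k ∈ (Finset.Icc 1 (p - 1)).filter (fun k => ∃ x ∈ Finset.range p, x * x % p = k % p), (k:ℤ) := by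
    refine Finset.sum_congr rfl fun k hk => ?_
    rw [Finset.mem_filter] at hk
    rw [(leg_iff p hk.1).1 hk.2, one_mul]
  have e2 : ∑ k ∈ (Finset.Icc 1 (p - 1)).filter (fun k => ¬ ∃ x ∈ Finset.range p, x * x % p = k % p),
      legendreSym p (k : ℤ) * (k : ℤ) =
      - ∑ k ∈ (Finset.Icc 1 (p - 1)).filter (fun k => ¬ ∃ x ∈ Finset.range p, x * x % p = k % p), (k:ℤ) := by
    rw [← Finset.sum_neg_distrib]
    refine Finset.sum_congr rfl fun k hk => ?_
    have hk1 := (Finset.mem_filter.1 hk).1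
    rw [Finset.mem_filter, leg_iff p hk1] at hk
    rw [(legendreSym.eq_one_or_neg_one p (leg_pm p hk.1)).resolve_left hk.2]; ring
  rw [e1, e2] at hM
  have : (∑ k ∈ (Finset.Icc 1 (p - 1)).filter (fun k => ∃ x ∈ Finset.range p, x * x % p = k % p), (k:ℤ)) <
    ∑ k ∈ (Finset.Icc 1 (p - 1)).filter (fun k => ¬ ∃ x ∈ Finset.range p, x * x % p = k % p), (k:ℤ) := by
    linarith
  rw [← Nat.cast_sum, ← Nat.cast_sum, Nat.cast_lt] at this
  exact this
end

section
/- Let p be a prime with p ≡ 3 (mod 4). Then |T(p)| < (2p√p/π)·(1 + (1/2)·log(p−2)). -/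
/-- `T p = √p ∑_{n=1}^{(p-1)/2} tan(π n² / p)`. -/
noncomputable def T (p : ℕ) : ℝ :=
  Real.sqrt p * ∑ n ∈ Finset.Icc 1 ((p - 1) / 2), Real.tan (Real.pi * (n : ℝ) ^ 2 / p)

lemma odd_harm (N : ℕ) :
    ∑ j ∈ Finset.range (N + 1), (1 : ℝ) / (2 * j + 1) ≤ 1 + (1 / 2) * Real.log (2 * N + 1) := by
  induction N with
  | zero => simp
  | succ N ih =>
    rw [Finset.sum_range_succ]
    have h1 : (0 : ℝ) < 2 * N + 1 := by positivity
    have h2 : (0 : ℝ) < 2 * N + 3 := by positivity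
    have h := Real.one_sub_inv_le_log_of_pos (div_pos h2 h1)
    rw [Real.log_div h2.ne' h1.ne'] at h
    have e : 1 - ((2 * (N : ℝ) + 3) / (2 * N + 1))⁻¹ = 2 * (1 / (2 * N + 3)) := by
      field_simp
      ring
    rw [e] at h
    push_cast
    have e2 : 2 * ((N : ℝ) + 1) + 1 = 2 * N + 3 := by ring
    rw [e2]
    linarith

lemma tan_lt_aux (N k : ℕ) (hk : 1 ≤ k) (hkN : k ≤ N) :
    Real.tan (Real.pi * k / (2 * N + 1 : ℝ)) <
      (2 * (2 * N + 1 : ℝ) / Real.pi) * (1 / (2 * ((N - k : ℕ) : ℝ) + 1)) := by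
  rw [Nat.cast_sub hkN]
  have hπ := Real.pi_pos
  have hk' : (1 : ℝ) ≤ k := by exact_mod_cast hk
  have hN' : (k : ℝ) ≤ N := by exact_mod_cast hkN
  set y : ℝ := Real.pi * (2 * ((N : ℝ) - k) + 1) / (2 * (2 * N + 1)) with hy
  have hp : (0 : ℝ) < 2 * N + 1 := by linarith
  have hm : (0 : ℝ) < 2 * ((N : ℝ) - k) + 1 := by linarith
  have hy0 : 0 < y := by positivity
  have e : Real.pi * k / (2 * N + 1 : ℝ) = Real.pi / 2 - y := by
    rw [hy]; field_simp; ring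
  have hy1 : y < Real.pi / 2 := by
    have : 0 < Real.pi * k / (2 * N + 1 : ℝ) := by positivity
    linarith
  have e2 : (2 * (2 * N + 1 : ℝ) / Real.pi) * (1 / (2 * ((N : ℝ) - k) + 1)) = y⁻¹ := by
    rw [hy]; field_simp
  rw [e, e2, Real.tan_pi_div_two_sub]
  exact inv_strictAnti₀ hy0 (Real.lt_tan hy0 hy1)

lemma sum_tan_lt (N : ℕ) (hN : 1 ≤ N) :
    ∑ k ∈ Finset.Icc 1 N, Real.tan (Real.pi * k / (2 * N + 1 : ℝ)) <
      (2 * (2 * N + 1 : ℝ) / Real.pi) * (1 + (1 / 2) * Real.log (2 * N - 1)) := by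
  have h1 : ∑ k ∈ Finset.Icc 1 N, Real.tan (Real.pi * k / (2 * N + 1 : ℝ)) <
      ∑ k ∈ Finset.Icc 1 N, (2 * (2 * N + 1 : ℝ) / Real.pi) * (1 / (2 * ((N - k : ℕ) : ℝ) + 1)) := by
    apply Finset.sum_lt_sum_of_nonempty
    · exact ⟨1, by simp [hN]⟩
    · intro k hk
      rw [Finset.mem_Icc] at hk
      exact tan_lt_aux N k hk.1 hk.2
  refine h1.trans_le ?_
  rw [← Finset.mul_sum]
  have hπ := Real.pi_pos
  apply mul_le_mul_of_nonneg_left _ (by positivity)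
  obtain ⟨M, rfl⟩ := Nat.exists_eq_add_of_le' hN
  have e : ∑ k ∈ Finset.Icc 1 (M + 1), (1 : ℝ) / (2 * ((M + 1 - k : ℕ) : ℝ) + 1) =
      ∑ j ∈ Finset.range (M + 1), (1 : ℝ) / (2 * j + 1) := by
    apply Finset.sum_bij' (fun k _ => M + 1 - k) (fun j _ => M + 1 - j)
    all_goals simp
    all_goals omega
  rw [e]
  have := odd_harm M
  have e3 : 2 * ((M + 1 : ℕ) : ℝ) - 1 = 2 * M + 1 := by push_cast; ring
  rw [e3]
  exact this

lemma abs_tan_eq (p : ℕ) (hp : 0 < p) (n : ℕ) (hb : 2 * ((n : ZMod p) ^ 2).valMinAbs.natAbs < p) :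
    |Real.tan (Real.pi * (n : ℝ) ^ 2 / p)| =
      Real.tan (Real.pi * (((n : ZMod p) ^ 2).valMinAbs.natAbs : ℝ) / p) := by
  have hp0 : (0 : ℝ) < p := by exact_mod_cast hp
  set v : ℤ := ((n : ZMod p) ^ 2).valMinAbs with hv
  have hc : (((n : ℤ) ^ 2 - v : ℤ) : ZMod p) = 0 := by
    push_cast
    rw [hv, ZMod.coe_valMinAbs]; simp
  obtain ⟨c, hc⟩ := (ZMod.intCast_zmod_eq_zero_iff_dvd _ p).mp hc
  have hc' : (n : ℝ) ^ 2 = v + p * c := by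
    have : (n : ℤ) ^ 2 = v + p * c := by linarith
    exact_mod_cast this
  have e1 : Real.pi * (n : ℝ) ^ 2 / p = Real.pi * v / p + c * Real.pi := by
    rw [hc']; field_simp
  rw [e1, Real.tan_add_int_mul_pi]
  have hnn : 0 ≤ Real.tan (Real.pi * ((v.natAbs : ℕ) : ℝ) / p) := by
    apply Real.tan_nonneg_of_nonneg_of_le_pi_div_two
    · have := Real.pi_pos; positivity
    · have : 2 * (v.natAbs : ℝ) ≤ p := by exact_mod_cast hb.le
      rw [div_le_div_iff₀ hp0 (by norm_num)]
      nlinarith [Real.pi_pos]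
  rcases Int.natAbs_eq v with h | h
  · have : (v : ℝ) = (v.natAbs : ℝ) := by
      conv_lhs => rw [h]
      simp
    rw [this, abs_of_nonneg hnn]
  · have : (v : ℝ) = -(v.natAbs : ℝ) := by
      conv_lhs => rw [h]
      simp
    rw [this, mul_neg, neg_div, Real.tan_neg, abs_neg, abs_of_nonneg hnn]

theorem T_upper_bound (p : ℕ) (hp : p.Prime) (h3 : p % 4 = 3) :
    |T p| < (2 * (p : ℝ) * Real.sqrt p / Real.pi) *
      (1 + (1 / 2) * Real.log ((p : ℝ) - 2)) := by
  haveI : Fact p.Prime := ⟨hp⟩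
  obtain ⟨N, hN⟩ : ∃ N, p = 2 * N + 1 := ⟨p / 2, by omega⟩
  have hN1 : 1 ≤ N := by omega
  have hpR : (p : ℝ) = 2 * N + 1 := by exact_mod_cast hN
  have hdiv : (p - 1) / 2 = N := by omega
  let f : ℕ → ℕ := fun n => ((n : ZMod p) ^ 2).valMinAbs.natAbs
  have hfle : ∀ n, f n ≤ N := fun n => by
    have := ZMod.natAbs_valMinAbs_le ((n : ZMod p) ^ 2)
    simp only [f]; omega
  have hne : ∀ n ∈ Finset.Icc 1 N, (n : ZMod p) ≠ 0 := fun n hn h => by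
    rw [Finset.mem_Icc] at hn
    have := Nat.le_of_dvd (by omega) ((ZMod.natCast_eq_zero_iff n p).mp h)
    omega
  have hmaps : ∀ n ∈ Finset.Icc 1 N, f n ∈ Finset.Icc 1 N := fun n hn => by
    rw [Finset.mem_Icc]
    refine ⟨?_, hfle n⟩
    rw [Nat.one_le_iff_ne_zero]
    simp only [f]
    rw [Int.natAbs_ne_zero, Ne, ZMod.valMinAbs_eq_zero]
    exact pow_ne_zero 2 (hne n hn)
  have hinj : Set.InjOn f (Finset.Icc 1 N : Finset ℕ) := by
    intro a ha b hb hab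
    have ha' : a ∈ Finset.Icc 1 N := ha
    have hb' : b ∈ Finset.Icc 1 N := hb
    have h1 := hne b hb'
    rw [Finset.mem_Icc] at ha' hb'
    have hs : (a : ZMod p) ^ 2 = (b : ZMod p) ^ 2 := by
      rcases Int.natAbs_eq_natAbs_iff.mp hab with h | h
      · rw [← ZMod.coe_valMinAbs ((a : ZMod p) ^ 2), h, ZMod.coe_valMinAbs]
      · exfalso
        have h2 : (a : ZMod p) ^ 2 = -(b : ZMod p) ^ 2 := by
          rw [← ZMod.coe_valMinAbs ((a : ZMod p) ^ 2), h, Int.cast_neg, ZMod.coe_valMinAbs]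
        have h4 : ((a : ZMod p) / b) ^ 2 = -1 := by
          rw [div_pow, h2]; field_simp
        exact ZMod.mod_four_ne_three_of_sq_eq_neg_one h4 h3
    rcases sq_eq_sq_iff_eq_or_eq_neg.mp hs with h | h
    · have := (ZMod.natCast_eq_natCast_iff' a b p).mp h
      rwa [Nat.mod_eq_of_lt (by omega), Nat.mod_eq_of_lt (by omega)] at this
    · exfalso
      have h5 : ((a + b : ℕ) : ZMod p) = 0 := by push_cast; rw [h]; ring
      have := Nat.le_of_dvd (by omega) ((ZMod.natCast_eq_zero_iff _ p).mp h5)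
      omega
  have himg : (Finset.Icc 1 N).image f = Finset.Icc 1 N :=
    Finset.eq_of_subset_of_card_le (Finset.image_subset_iff.mpr hmaps)
      (Finset.card_image_of_injOn hinj).ge
  have hsum : |∑ n ∈ Finset.Icc 1 N, Real.tan (Real.pi * (n : ℝ) ^ 2 / p)| ≤
      ∑ k ∈ Finset.Icc 1 N, Real.tan (Real.pi * k / p) := by
    refine (Finset.abs_sum_le_sum_abs _ _).trans (le_of_eq ?_)
    conv_rhs => rw [← himg]
    rw [Finset.sum_image hinj]
    refine Finset.sum_congr rfl fun n _ => ?_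
    exact abs_tan_eq p hp.pos n (by have := hfle n; simp only [f] at this; omega)
  have hlt := sum_tan_lt N hN1
  rw [← hpR] at hlt
  have hpos : 0 < Real.sqrt p := Real.sqrt_pos.mpr (by exact_mod_cast hp.pos)
  have e : (2 * (N : ℝ) - 1) = p - 2 := by rw [hpR]; ring
  rw [e] at hlt
  unfold T
  rw [hdiv, abs_mul, abs_of_pos hpos]
  calc _ < Real.sqrt p * (2 * (p : ℝ) / Real.pi * (1 + 1 / 2 * Real.log ((p : ℝ) - 2))) :=
        mul_lt_mul_of_pos_left (hsum.trans_lt hlt) hpos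
    _ = _ := by ring
end

section
/- Let p be a prime with p ≡ 3 (mod 4). Then C(p) = −T(p) if p ≡ 7 (mod 8), and C(p) = T(p)/3 if p ≡ 3 (mod 8). -/
/-- `C p = √p ∑_{n=1}^{(p-1)/2} cot(π n² / p)`. -/
noncomputable def C (p : ℕ) : ℝ :=
  Real.sqrt p * ∑ n ∈ Finset.Icc 1 ((p - 1) / 2), Real.cot (Real.pi * (n : ℝ) ^ 2 / p)

open Finset in
theorem aux_sum (p m : ℕ) [NeZero p] (hm : p = 2 * m + 1) (F : ZMod p → ℝ) (h0 : F 0 = 0)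
    (hF : ∀ x, F (-x) = F x) : ∑ x, F x = 2 * ∑ n ∈ Finset.Icc 1 m, F (n : ZMod p) := by
  have h1 : ∑ x, F x = ∑ n ∈ Finset.range p, F (n : ZMod p) := by
    symm
    refine Finset.sum_bij (fun n _ => (n : ZMod p)) (by simp) ?_ ?_ (by simp)
    · intro a ha b hb h
      have := congrArg ZMod.val h
      rwa [ZMod.val_cast_of_lt (Finset.mem_range.1 ha),
        ZMod.val_cast_of_lt (Finset.mem_range.1 hb)] at this
    · intro b _
      exact ⟨b.val, Finset.mem_range.2 (ZMod.val_lt b), by simp⟩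
  have h2 : Finset.Icc 1 m = Finset.Ico 1 (m + 1) := by ext; simp
  have h3 : ∑ n ∈ Finset.Ico (m + 1) p, F (n : ZMod p) = ∑ n ∈ Finset.Ico 1 (m + 1), F (n : ZMod p) := by
    refine Finset.sum_bij (fun n _ => p - n) ?_ ?_ ?_ ?_
    · intro a ha; rw [Finset.mem_Ico] at *; omega
    · intro a ha b hb h; rw [Finset.mem_Ico] at *; omega
    · intro b hb; rw [Finset.mem_Ico] at hb
      exact ⟨p - b, by rw [Finset.mem_Ico]; omega, by omega⟩
    · intro a ha; rw [Finset.mem_Ico] at ha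
      rw [Nat.cast_sub ha.2.le]; simp [hF]
  rw [h1, h2, Finset.range_eq_Ico, Finset.sum_eq_sum_Ico_succ_bot (by omega),
    ← Finset.sum_Ico_consecutive _ (show 0 + 1 ≤ m + 1 by omega) (show m + 1 ≤ p by omega), h3]
  simp [h0]; ring

theorem aux_tan (x : ℝ) : Real.tan x = (Real.tan x)⁻¹ - 2 * (Real.tan (2 * x))⁻¹ := by
  rw [Real.tan_two_mul]
  by_cases h : Real.tan x = 0
  · simp [h]
  · rw [inv_div]; field_simp; ring

/-- cotangent as a function on residues -/
noncomputable def cotZ (p : ℕ) (a : ZMod p) : ℝ := (Real.tan (Real.pi * (a.val : ℝ) / p))⁻¹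

theorem cotZ_nat (p : ℕ) [NeZero p] (k : ℕ) :
    cotZ p (k : ZMod p) = (Real.tan (Real.pi * (k : ℝ) / p))⁻¹ := by
  have hp : (p : ℝ) ≠ 0 := by exact_mod_cast NeZero.ne p
  rw [cotZ, ZMod.val_natCast]
  have : Real.pi * (k : ℝ) / p = Real.pi * ((k % p : ℕ) : ℝ) / p + (k / p : ℕ) * Real.pi := by
    have h : (k : ℝ) = (k % p : ℕ) + p * (k / p : ℕ) := by exact_mod_cast (Nat.mod_add_div k p).symm
    rw [h]; field_simp
  rw [this, Real.tan_add_nat_mul_pi]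

theorem cotZ_neg (p : ℕ) [NeZero p] (a : ZMod p) : cotZ p (-a) = - cotZ p a := by
  have hp : (p : ℝ) ≠ 0 := by exact_mod_cast NeZero.ne p
  have h : (-a) = ((p - a.val : ℕ) : ZMod p) := by
    rw [Nat.cast_sub (ZMod.val_lt a).le]; simp
  rw [h, cotZ_nat, Nat.cast_sub (ZMod.val_lt a).le, cotZ]
  have : Real.pi * ((p : ℝ) - a.val) / p = Real.pi - Real.pi * (a.val : ℝ) / p := by field_simp
  rw [this, Real.tan_pi_sub, inv_neg]

theorem C_T_relation (p : ℕ) (hp : p.Prime) (h3 : p % 4 = 3) :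
    (p % 8 = 7 → C p = -T p) ∧ (p % 8 = 3 → C p = T p / 3) := by
  haveI : Fact p.Prime := ⟨hp⟩
  have hp2 : p ≠ 2 := by rintro rfl; omega
  obtain ⟨m, hm⟩ : ∃ m, p = 2 * m + 1 := ⟨p / 2, by omega⟩
  have hm' : (p - 1) / 2 = m := by omega
  have z0 : cotZ p 0 = 0 := by simp [cotZ]
  have key : ∀ c : ZMod p, ∑ x : ZMod p, cotZ p (c * x ^ 2) =
      2 * ∑ n ∈ Finset.Icc 1 m, cotZ p (c * (n : ZMod p) ^ 2) := fun c =>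
    aux_sum p m hm (fun x => cotZ p (c * x ^ 2)) (by simp [z0]) (by simp)
  have sq : ∀ s : ZMod p, s ≠ 0 → ∑ x : ZMod p, cotZ p (s ^ 2 * x ^ 2) =
      ∑ x : ZMod p, cotZ p (1 * x ^ 2) := by
    intro s hs
    refine Fintype.sum_equiv (Equiv.mulLeft₀ s hs) _ _ ?_
    intro x; simp [mul_pow]
  have hC : C p = Real.sqrt p * ∑ n ∈ Finset.Icc 1 m, cotZ p (1 * (n : ZMod p) ^ 2) := by
    rw [C, hm']
    congr 1
    refine Finset.sum_congr rfl fun n _ => ?_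
    have := cotZ_nat p (n ^ 2)
    push_cast at this
    rw [one_mul, this, Real.tan_inv_eq_cot]
  have hT : T p = C p - 2 * (Real.sqrt p * ∑ n ∈ Finset.Icc 1 m, cotZ p (2 * (n : ZMod p) ^ 2)) := by
    rw [hC, T, hm', mul_left_comm, ← mul_sub, Finset.mul_sum _ _ (2 : ℝ), ← Finset.sum_sub_distrib]
    congr 1
    refine Finset.sum_congr rfl fun n _ => ?_
    have h1 := cotZ_nat p (n ^ 2)
    have h2 := cotZ_nat p (2 * n ^ 2)
    push_cast at h1 h2
    rw [one_mul, h1, h2, show Real.pi * (2 * (n : ℝ) ^ 2) / p = 2 * (Real.pi * (n : ℝ) ^ 2 / p) by ring]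
    exact aux_tan _
  have h20 : (2 : ZMod p) ≠ 0 := by
    intro h
    have : ((2 : ℕ) : ZMod p) = 0 := by exact_mod_cast h
    rw [ZMod.natCast_eq_zero_iff] at this
    exact hp2 ((Nat.prime_dvd_prime_iff_eq hp Nat.prime_two).1 this)
  constructor
  · intro h7
    obtain ⟨s, hs⟩ := (ZMod.exists_sq_eq_two_iff hp2).2 (Or.inr h7)
    have hs0 : s ≠ 0 := by rintro rfl; simp at hs; exact h20 hs
    have e := sq s hs0
    rw [pow_two s, ← hs, key, key] at e
    have e' := mul_left_cancel₀ two_ne_zero e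
    rw [hT, e', ← hC]; ring
  · intro h7
    obtain ⟨s, hs⟩ := (ZMod.exists_sq_eq_neg_two_iff hp2).2 (Or.inr h7)
    have hs0 : s ≠ 0 := by rintro rfl; simp at hs; exact h20 hs
    have e := sq s hs0
    rw [pow_two s, ← hs, key, key] at e
    have e' := mul_left_cancel₀ two_ne_zero e
    simp only [neg_mul (2 : ZMod p), cotZ_neg, Finset.sum_neg_distrib] at e'
    rw [← e'] at hC
    rw [hT]; linarith
end

section
/- Let p be a prime with p ≡ 3 (mod 4) and p > 3. Then C(p) = √p · Σ_{n=1}^{(p-1)/2} cot(π n²/p) is an odd positive integer, divisible by p but not by p². -/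
open Finset

lemma aux_bound {K x y s : ℝ} (hK : 1 ≤ K) (hx : K ≤ x) (hxy : x ≤ y) (h1 : 1 ≤ s) (h2 : s ≤ 2) :
    |x ^ (-s) - y ^ (-s)| ≤ 2 * (y - x) / K ^ 2 := by
  have hx0 : 0 < x := by linarith
  have hy0 : 0 < y := by linarith
  have hle : y ^ (-s) ≤ x ^ (-s) := Real.rpow_le_rpow_of_nonpos hx0 hxy (by linarith)
  rw [abs_of_nonneg (by linarith)]
  have hB := one_add_mul_self_le_rpow_one_add (s := x / y - 1) (p := s) (by
    have : 0 < x / y := by positivity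
    linarith) h1
  have e1 : (1 + (x / y - 1)) ^ s = x ^ s * y ^ (-s) := by
    rw [add_sub_cancel, Real.div_rpow hx0.le hy0.le, Real.rpow_neg hy0.le]; rfl
  rw [e1] at hB
  have hxs : 0 < x ^ (-s) := by positivity
  have hxx : x ^ s * x ^ (-s) = 1 := by rw [← Real.rpow_add hx0]; simp
  have e2 : x ^ (-s) - y ^ (-s) ≤ x ^ (-s) * (s * (1 - x / y)) := by
    have := mul_le_mul_of_nonneg_left hB hxs.le
    have e3 : x ^ (-s) * (x ^ s * y ^ (-s)) = y ^ (-s) := by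
      rw [← mul_assoc, mul_comm (x ^ (-s)), hxx, one_mul]
    rw [e3] at this
    nlinarith
  have e4 : x ^ (-s) ≤ K⁻¹ := by
    calc x ^ (-s) ≤ x ^ (-1 : ℝ) := Real.rpow_le_rpow_of_exponent_le (by linarith) (by linarith)
      _ = x⁻¹ := by rw [Real.rpow_neg_one]
      _ ≤ K⁻¹ := by gcongr
  have e5 : 1 - x / y = (y - x) * y⁻¹ := by field_simp
  have e6 : y⁻¹ ≤ K⁻¹ := by gcongr; linarith
  calc _ ≤ _ := e2
    _ = x ^ (-s) * (s * ((y - x) * y⁻¹)) := by rw [e5]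
    _ ≤ K⁻¹ * (2 * ((y - x) * K⁻¹)) := by
      have : 0 ≤ y - x := by linarith
      gcongr
    _ = _ := by field_simp

lemma cot_hasSum (x : ℝ) (h0 : 0 < x) (h1 : x < 1) :
    Filter.Tendsto (fun N : ℕ => ∑ m ∈ range N, (1 / (m + x) - 1 / (m + (1 - x)))) Filter.atTop
      (nhds (Real.pi * Real.cot (Real.pi * x))) := by
  have hx : (x : ℂ) ∈ Complex.integerComplement := by
    rintro ⟨n, hn⟩
    have : (n : ℝ) = x := by exact_mod_cast hn
    rw [← this] at h0 h1
    have a : 0 < n := by exact_mod_cast h0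
    have b : n < 1 := by exact_mod_cast h1
    omega
  have h := tendsto_logDeriv_euler_cot_sub hx
  have h' : Filter.Tendsto (fun N : ℕ => ∑ j ∈ range N, (1 / (x - (j + 1)) + 1 / (x + (j + 1))))
      Filter.atTop (nhds (Real.pi * Real.cot (Real.pi * x) - 1 / x)) := by
    have hre := (Complex.continuous_re.tendsto _).comp h
    convert hre using 2
    · rw [Function.comp_apply, ← Complex.ofReal_re (∑ j ∈ range _, _)]
      congr 1
      simp [cotTerm]
    · rw [← Complex.ofReal_re (_ - _)]
      congr 1
      simp
  have h2 : Filter.Tendsto (fun N : ℕ => 1 / (N + 1 - x : ℝ)) Filter.atTop (nhds 0) := by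
    have := tendsto_one_div_add_atTop_nhds_zero_nat (𝕜 := ℝ)
    refine squeeze_zero' (g := fun N : ℕ => 1 / (N : ℝ)) ?_ ?_ tendsto_one_div_atTop_nhds_zero_nat
    · exact Filter.Eventually.of_forall fun N => by
        have : (0:ℝ) ≤ N := by positivity
        apply one_div_nonneg.2; linarith
    · filter_upwards [Filter.eventually_gt_atTop 0] with N hN
      have : (0:ℝ) < N := by exact_mod_cast hN
      apply one_div_le_one_div_of_le this; linarith
  rw [← Filter.tendsto_add_atTop_iff_nat 1]
  have h3 := (h'.const_add (1 / x)).sub h2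
  rw [add_sub_cancel, sub_zero] at h3
  refine h3.congr fun N => ?_
  induction N with
  | zero => simp [sub_eq_add_neg]
  | succ N ih =>
    rw [sum_range_succ, sum_range_succ _ (N+1), ← ih]
    have : (N : ℝ) + 1 - x ≠ 0 := by have : (0:ℝ) ≤ N := by positivity
                                     linarith
    have e : (1:ℝ) / (x - (N+1)) = - (1 / (N + 1 - x)) := by
      rw [← one_div_neg_eq_neg_one_div]; ring_nf
    rw [e]; push_cast
    ring_nf

open Filter Topology in
lemma D_tendsto (p : ℕ) (j : ℕ) (h0 : 0 < j) (h1 : j < p) :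
    Tendsto (fun s : ℝ => ∑' m : ℕ, (((j + p * m : ℕ) : ℝ) ^ (-s) - ((p - j + p * m : ℕ) : ℝ) ^ (-s)))
      (𝓝[>] 1) (𝓝 (Real.pi / p * Real.cot (Real.pi * j / p))) := by
  have bd : ∀ s : ℝ, 1 ≤ s → s ≤ 2 → ∀ m : ℕ,
      ‖((j + p * m : ℕ) : ℝ) ^ (-s) - ((p - j + p * m : ℕ) : ℝ) ^ (-s)‖ ≤ (2 * p) * (1 / ((m + 1 : ℕ) : ℝ) ^ 2) := by
    intro s hs1 hs2 m
    have hpm : m ≤ p * m := Nat.le_mul_of_pos_left _ (by omega)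
    have k1 : ((m + 1 : ℕ) : ℝ) ≥ 1 := by simp
    rw [Real.norm_eq_abs]
    rcases le_total (j + p * m) (p - j + p * m) with h | h
    · refine (aux_bound k1 (Nat.cast_le.2 (by omega)) (Nat.cast_le.2 h) hs1 hs2).trans ?_
      have : ((p - j + p * m : ℕ) : ℝ) ≤ p + ((j + p * m : ℕ) : ℝ) := by
        exact_mod_cast (by omega : p - j + p * m ≤ p + (j + p * m))
      rw [← mul_one_div]
      gcongr; linarith
    · rw [abs_sub_comm]
      refine (aux_bound k1 (Nat.cast_le.2 (by omega)) (Nat.cast_le.2 h) hs1 hs2).trans ?_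
      have : ((j + p * m : ℕ) : ℝ) ≤ p + ((p - j + p * m : ℕ) : ℝ) := by
        exact_mod_cast (by omega : j + p * m ≤ p + (p - j + p * m))
      rw [← mul_one_div]
      gcongr; linarith
  have hsum : Summable (fun m : ℕ => (2 * p : ℝ) * (1 / ((m + 1 : ℕ) : ℝ) ^ 2)) := by
    apply Summable.mul_left
    exact (summable_nat_add_iff 1).2 (Real.summable_one_div_nat_pow.2 one_lt_two)
  have key := tendsto_tsum_of_dominated_convergence (𝓕 := 𝓝[>] (1:ℝ))
    (f := fun (s : ℝ) (m : ℕ) => ((j + p * m : ℕ) : ℝ) ^ (-s) - ((p - j + p * m : ℕ) : ℝ) ^ (-s))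
    (g := fun m : ℕ => ((j + p * m : ℕ) : ℝ) ^ (-1 : ℝ) - ((p - j + p * m : ℕ) : ℝ) ^ (-1 : ℝ))
    hsum ?_ ?_
  · convert key using 2
    symm
    have hs : Summable (fun m : ℕ => ((j + p * m : ℕ) : ℝ) ^ (-1 : ℝ) - ((p - j + p * m : ℕ) : ℝ) ^ (-1 : ℝ)) :=
      Summable.of_norm_bounded hsum (fun m => bd 1 le_rfl one_le_two m)
    refine tendsto_nhds_unique hs.hasSum.tendsto_sum_nat ?_
    have hp : (0 : ℝ) < p := by exact_mod_cast (by omega : 0 < p)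
    have hj : (0 : ℝ) < j := by exact_mod_cast h0
    have hjp : (j : ℝ) < p := by exact_mod_cast h1
    have := (cot_hasSum (j / p) (by positivity) ((div_lt_one hp).2 hjp)).const_mul (1 / (p:ℝ))
    convert this using 2
    · rw [mul_sum]
      refine sum_congr rfl fun m _ => ?_
      rw [Real.rpow_neg_one, Real.rpow_neg_one]
      push_cast [Nat.cast_sub h1.le]
      have e1 : (m : ℝ) + j / p = (j + p * m) / p := by field_simp; ring
      have e2 : (m : ℝ) + (1 - j / p) = (p - j + p * m) / p := by field_simp; ring
      rw [e1, e2, mul_sub]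
      congr 1
      · field_simp
      · field_simp
    · rw [mul_div_assoc]; ring
  · intro m
    have c : ∀ n : ℕ, 0 < n → Tendsto (fun s : ℝ => (n : ℝ) ^ (-s)) (𝓝[>] 1) (𝓝 ((n : ℝ) ^ (-1 : ℝ))) := by
      intro n hn
      have : Continuous (fun s : ℝ => (n : ℝ) ^ (-s)) :=
        Continuous.rpow continuous_const continuous_neg (fun _ => Or.inl (by positivity))
      exact (this.tendsto 1).mono_left nhdsWithin_le_nhds
    exact (c _ (by omega)).sub (c _ (by omega))
  · have : Set.Ioc (1:ℝ) 2 ∈ 𝓝[>] (1:ℝ) := Ioc_mem_nhdsGT one_lt_two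
    filter_upwards [this] with s hs m
    exact bd s hs.1.le hs.2 m

lemma L_nonneg (p : ℕ) [Fact p.Prime] (s : ℝ) (hs : 1 < s) :
    Summable (fun n : ℕ => ((quadraticChar (ZMod p) (n : ZMod p) : ℤ) : ℝ) * (n : ℝ) ^ (-s)) ∧
    0 ≤ ∑' n : ℕ, ((quadraticChar (ZMod p) (n : ZMod p) : ℤ) : ℝ) * (n : ℝ) ^ (-s) := by
  let f : ℕ →*₀ ℝ :=
    { toFun := fun n => ((quadraticChar (ZMod p) (n : ZMod p) : ℤ) : ℝ) * (n : ℝ) ^ (-s)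
      map_zero' := by simp
      map_one' := by simp
      map_mul' := fun a b => by
        push_cast
        rw [map_mul, Real.mul_rpow (by positivity) (by positivity)]
        push_cast; ring }
  have habs : ∀ a : ZMod p, |((quadraticChar (ZMod p) a : ℤ) : ℝ)| ≤ 1 := by
    intro a
    rcases quadraticChar_isQuadratic (ZMod p) a with h | h | h <;> rw [h] <;> simp
  have hb : ∀ n : ℕ, ‖f n‖ ≤ (n : ℝ) ^ (-s) := by
    intro n
    change |((quadraticChar (ZMod p) (n : ZMod p) : ℤ) : ℝ) * (n : ℝ) ^ (-s)| ≤ _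
    rw [abs_mul, abs_of_nonneg (by positivity : 0 ≤ (n:ℝ) ^ (-s))]
    exact mul_le_of_le_one_left (by positivity) (habs _)
  have hn : Summable (‖f ·‖) :=
    Summable.of_nonneg_of_le (fun _ => norm_nonneg _) hb (Real.summable_nat_rpow.2 (by linarith))
  refine ⟨hn.of_norm, ?_⟩
  have hP := EulerProduct.eulerProduct_completely_multiplicative_hasProd hn
  refine ge_of_tendsto' hP fun t => prod_nonneg fun q _ => ?_
  apply inv_nonneg.2
  have : (((q : ℕ) : ℝ)) ^ (-s) ≤ 1 :=
    Real.rpow_le_one_of_one_le_of_nonpos (by exact_mod_cast q.2.one_lt.le) (by linarith)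
  have h2 := (le_abs_self _).trans (hb q)
  linarith

open Filter Topology in
lemma S_nonneg (p : ℕ) [Fact p.Prime] (h3 : p % 4 = 3) :
    0 ≤ ∑ a : ZMod p, ((quadraticChar (ZMod p) a : ℤ) : ℝ) * Real.cot (Real.pi * a.val / p) := by
  have hp : 0 < p := by omega
  have hneg : ∀ a : ZMod p, quadraticChar (ZMod p) (-a) = - quadraticChar (ZMod p) a := by
    intro a
    rw [← neg_one_mul, map_mul, quadraticChar_neg_one (by rw [ZMod.ringChar_zmod_n]; omega),
      ZMod.card, ZMod.χ₄_nat_three_mod_four h3]; ring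
  have key : Tendsto (fun s : ℝ => ∑ a : ZMod p, ((quadraticChar (ZMod p) a : ℤ) : ℝ) *
      ∑' m : ℕ, (((a.val + p * m : ℕ) : ℝ) ^ (-s) - ((p - a.val + p * m : ℕ) : ℝ) ^ (-s))) (𝓝[>] 1)
      (𝓝 (∑ a : ZMod p, ((quadraticChar (ZMod p) a : ℤ) : ℝ) * (Real.pi / p * Real.cot (Real.pi * a.val / p)))) := by
    refine tendsto_finsetSum _ fun a _ => ?_
    by_cases ha : a = 0
    · simp [ha]
    · refine Tendsto.const_mul _ (D_tendsto p a.val ?_ (ZMod.val_lt a))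
      exact Nat.pos_of_ne_zero fun h => ha ((ZMod.val_eq_zero a).1 h)
  have h0 : 0 ≤ ∑ a : ZMod p, ((quadraticChar (ZMod p) a : ℤ) : ℝ) * (Real.pi / p * Real.cot (Real.pi * a.val / p)) := by
    refine ge_of_tendsto key ?_
    filter_upwards [self_mem_nhdsWithin] with s hs
    obtain ⟨hS, hL⟩ := L_nonneg p s hs
    rw [Nat.sumByResidueClasses hS p] at hL
    have hs1 : ∀ j : ℕ, Summable (fun m : ℕ => ((j + p * m : ℕ) : ℝ) ^ (-s)) := by
      intro j
      have := (Real.summable_nat_rpow (p := -s)).2 (by have : 1 < s := hs; linarith)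
      exact this.comp_injective (i := fun m : ℕ => j + p * m) (fun x y h => by
        have : p * x = p * y := by simpa using h
        exact Nat.eq_of_mul_eq_mul_left hp this)
    have e1 : ∀ a : ZMod p, ∑' m : ℕ, ((quadraticChar (ZMod p) ((a.val + p * m : ℕ) : ZMod p) : ℤ) : ℝ) * ((a.val + p * m : ℕ) : ℝ) ^ (-s)
        = ((quadraticChar (ZMod p) a : ℤ) : ℝ) * ∑' m : ℕ, ((a.val + p * m : ℕ) : ℝ) ^ (-s) := by
      intro a
      rw [← tsum_mul_left]
      congr 1; ext m
      simp
    simp_rw [e1] at hL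
    have e2 : ∑ a : ZMod p, ((quadraticChar (ZMod p) a : ℤ) : ℝ) *
      ∑' m : ℕ, (((a.val + p * m : ℕ) : ℝ) ^ (-s) - ((p - a.val + p * m : ℕ) : ℝ) ^ (-s)) =
      ∑ a : ZMod p, ((quadraticChar (ZMod p) a : ℤ) : ℝ) * ∑' m : ℕ, ((a.val + p * m : ℕ) : ℝ) ^ (-s)
      + ∑ a : ZMod p, ((quadraticChar (ZMod p) (-a) : ℤ) : ℝ) * ∑' m : ℕ, (((-a).val + p * m : ℕ) : ℝ) ^ (-s) := by
      rw [← sum_add_distrib]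
      refine sum_congr rfl fun a _ => ?_
      by_cases ha : a = 0
      · simp [ha]
      · have : NeZero a := ⟨ha⟩
        rw [(hs1 _).tsum_sub (hs1 _), hneg, ZMod.val_neg_of_ne_zero]
        push_cast; ring
    rw [e2]
    have e3 := Equiv.sum_comp (Equiv.neg (ZMod p)) (fun a : ZMod p => ((quadraticChar (ZMod p) a : ℤ) : ℝ) * ∑' m : ℕ, ((a.val + p * m : ℕ) : ℝ) ^ (-s))
    simp only [Equiv.neg_apply] at e3
    rw [e3]; linarith
  have e4 : ∑ a : ZMod p, ((quadraticChar (ZMod p) a : ℤ) : ℝ) * (Real.pi / p * Real.cot (Real.pi * a.val / p))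
     = Real.pi / p * ∑ a : ZMod p, ((quadraticChar (ZMod p) a : ℤ) : ℝ) * Real.cot (Real.pi * a.val / p) := by
    rw [mul_sum]; exact sum_congr rfl fun a _ => by ring
  rw [e4] at h0
  exact nonneg_of_mul_nonneg_right h0 (by positivity)

lemma A_facts (p : ℕ) [Fact p.Prime] (h3 : p % 4 = 3) (hgt : p > 3) :
    ∃ h : ℤ, ∑ a : ZMod p, (a.val : ℤ) * quadraticChar (ZMod p) a = p * h ∧ Odd h ∧ |h| < p := by
  have hchar : ringChar (ZMod p) ≠ 2 := by rw [ZMod.ringChar_zmod_n]; omega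
  set χ := quadraticChar (ZMod p) with hχ
  set A := ∑ a : ZMod p, (a.val : ℤ) * χ a with hA
  have hdvd : (p : ℤ) ∣ A := by
    rw [← ZMod.intCast_zmod_eq_zero_iff_dvd, hA]
    push_cast
    have : ∀ a : ZMod p, ((a.val : ℕ) : ZMod p) * ((χ a : ℤ) : ZMod p) = a ^ (p / 2 + 1) := by
      intro a
      rw [hχ, quadraticChar_eq_pow_of_char_ne_two' hchar, ZMod.card, ZMod.natCast_zmod_val, pow_succ']
    rw [sum_congr rfl fun a _ => this a]
    apply FiniteField.sum_pow_lt_card_sub_one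
    rw [ZMod.card]; omega
  obtain ⟨h, hh⟩ := hdvd
  have two_ne : (2 : ZMod p) ≠ 0 := by
    intro h2
    have : ((2 : ℕ) : ZMod p) = 0 := by exact_mod_cast h2
    rw [ZMod.natCast_eq_zero_iff] at this
    have := Nat.le_of_dvd (by norm_num) this
    omega
  set F : Finset (ZMod p) := univ.filter (fun a => p < 2 * a.val) with hF
  set U := ∑ a ∈ F, χ a with hU
  have hcard : F.card = (p - 1) / 2 := by
    have : F.image ZMod.val = Finset.Icc ((p+1)/2) (p-1) := by
      ext n
      simp only [hF, mem_image, mem_filter, mem_univ, true_and, mem_Icc]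
      constructor
      · rintro ⟨a, ha, rfl⟩
        have := ZMod.val_lt a
        omega
      · intro hn
        exact ⟨(n : ZMod p), by rw [ZMod.val_natCast_of_lt (by omega)]; omega, ZMod.val_natCast_of_lt (by omega)⟩
    rw [← card_image_of_injective F (ZMod.val_injective p), this, Nat.card_Icc]
    omega
  have hFne : ∀ a ∈ F, χ a = 1 ∨ χ a = -1 := by
    intro a ha
    apply quadraticChar_dichotomy
    rintro rfl
    simp [hF] at ha
  have hUodd : Odd U := by
    have hd : (2 : ℤ) ∣ ∑ a ∈ F, (χ a - 1) := by
      refine dvd_sum fun a ha => ?_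
      rcases hFne a ha with h | h <;> rw [h] <;> decide
    rw [sum_sub_distrib, ← hU, sum_const, hcard, nsmul_eq_mul, mul_one] at hd
    rw [Int.odd_iff]; omega
  have hUle : |U| ≤ ((p - 1) / 2 : ℕ) := by
    rw [← hcard]
    refine (abs_sum_le_sum_abs _ _).trans ?_
    rw [sum_congr rfl (g := fun _ => (1:ℤ))]
    · simp
    · intro a ha
      rcases hFne a ha with h | h <;> rw [h] <;> simp
  have hval : ∀ a : ZMod p, ((2 * a).val : ℤ) = 2 * a.val - if p < 2 * a.val then (p : ℤ) else 0 := by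
    intro a
    have hl := ZMod.val_lt a
    have e : (2 * a).val = (2 * a.val) % p := by
      rw [ZMod.val_mul]
      have : (2 : ZMod p).val = 2 := by
        have := ZMod.val_natCast_of_lt (n := p) (a := 2) (by omega)
        exact_mod_cast this
      rw [this]
    rw [e]
    split_ifs with hc
    · rw [Nat.mod_eq_sub_mod (by omega), Nat.mod_eq_of_lt (by omega)]
      omega
    · rw [Nat.mod_eq_of_lt (by omega)]; simp
  have hre : A = χ 2 * (2 * A - p * U) := by
    have h1 := Equiv.sum_comp (Equiv.mulLeft₀ (2 : ZMod p) two_ne) (fun a : ZMod p => (a.val : ℤ) * χ a)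
    simp only [Equiv.mulLeft₀_apply] at h1
    conv_lhs => rw [hA, ← h1]
    conv_rhs => rw [hA, hU, hF, sum_filter, mul_sum, mul_sum, ← sum_sub_distrib, mul_sum]
    refine sum_congr rfl fun a _ => ?_
    rw [hval, map_mul]
    split_ifs <;> ring
  have hp0 : (p : ℤ) ≠ 0 := by exact_mod_cast (by omega : p ≠ 0)
  refine ⟨h, hh, ?_⟩
  rw [hh] at hre
  have hU' : U = h ∨ U = 3 * h := by
    rcases quadraticChar_dichotomy two_ne with h2 | h2
    · left
      rw [← hχ] at h2
      rw [h2] at hre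
      apply mul_left_cancel₀ hp0; linarith
    · right
      rw [← hχ] at h2
      rw [h2] at hre
      apply mul_left_cancel₀ hp0; linarith
  constructor
  · rcases hU' with e | e
    · rwa [← e]
    · rw [e] at hUodd; exact (Int.odd_mul.1 hUodd).2
  · rcases hU' with e | e <;> rw [e] at hUle <;> rw [abs_lt] <;> rw [abs_le] at hUle <;> omega

lemma sum_nz {z : ℂ} {p : ℕ} (hz : z ^ p = 1) (h1 : z ≠ 1) :
    ∑ n ∈ range p, (n : ℂ) * z ^ n = p / (z - 1) := by
  have h0 : z - 1 ≠ 0 := sub_ne_zero.2 h1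
  have hN : ∀ N : ℕ, (z - 1) * ∑ n ∈ range N, (n : ℂ) * z ^ n = N * z ^ N - z * ∑ n ∈ range N, z ^ n := by
    intro N
    induction N with
    | zero => simp
    | succ N ih => rw [sum_range_succ, mul_add, ih, sum_range_succ]; push_cast; ring
  have hg : ∑ n ∈ range p, z ^ n = 0 := by
    rw [geom_sum_eq h1, hz]; simp
  rw [eq_div_iff h0, mul_comm, hN, hg, hz]; simp

lemma sum_val (p : ℕ) [Fact p.Prime] (b : ZMod p) (hb : b ≠ 0) :
    ∑ a : ZMod p, (a.val : ℂ) * ZMod.stdAddChar (b * a) =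
      p / 2 * (-Complex.I * (Real.cot (Real.pi * b.val / p) : ℝ) - 1) := by
  set z : ℂ := ZMod.stdAddChar b with hz
  have hp0 : (p : ℂ) ≠ 0 := by exact_mod_cast (Fact.out : p.Prime).ne_zero
  have hz1 : z ≠ 1 := by
    intro h
    apply hb
    apply ZMod.injective_stdAddChar
    rw [← hz, h]; simp
  have hpow : ∀ n : ℕ, z ^ n = ZMod.stdAddChar (b * (n : ZMod p)) := by
    intro n
    rw [hz, ← AddChar.map_nsmul_eq_pow]; congr 1; simp [mul_comm]
  have hzp : z ^ p = 1 := by rw [hpow]; simp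
  have e : ∑ a : ZMod p, (a.val : ℂ) * ZMod.stdAddChar (b * a) = ∑ n ∈ range p, (n : ℂ) * z ^ n := by
    refine sum_nbij' (fun a : ZMod p => a.val) (fun n : ℕ => (n : ZMod p)) ?_ ?_ ?_ ?_ ?_
    · intro a _; simpa using ZMod.val_lt a
    · intro n _; simp
    · intro a _; simp
    · intro n hn; exact ZMod.val_natCast_of_lt (by simpa using hn)
    · intro a _; rw [hpow]; simp
  rw [e, sum_nz hzp hz1]
  have hzexp : z = Complex.exp (2 * Real.pi * Complex.I * ((b.val : ℂ) / p)) := by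
    rw [hz, ← ZMod.natCast_zmod_val b]
    have := ZMod.stdAddChar_coe (N := p) (b.val : ℤ)
    push_cast at this
    rw [this]
    simp [mul_div_assoc]
  have hc : ((Real.cot (Real.pi * b.val / p) : ℝ) : ℂ) = (z + 1) / (Complex.I * (1 - z)) := by
    rw [hzexp, ← Complex.cot_pi_eq_exp_ratio]
    push_cast
    rw [mul_div_assoc]
  rw [hc]
  have h0 : z - 1 ≠ 0 := sub_ne_zero.2 hz1
  have h0' : 1 - z ≠ 0 := sub_ne_zero.2 hz1.symm
  field_simp
  ring

lemma A_sq (p : ℕ) [Fact p.Prime] (h3 : p % 4 = 3) :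
    ((∑ a : ZMod p, (a.val : ℤ) * quadraticChar (ZMod p) a : ℤ) : ℝ) ^ 2 =
    p / 4 * (∑ a : ZMod p, ((quadraticChar (ZMod p) a : ℤ) : ℝ) * Real.cot (Real.pi * a.val / p)) ^ 2 := by
  have hchar : ringChar (ZMod p) ≠ 2 := by rw [ZMod.ringChar_zmod_n]; omega
  have hp0 : (p : ℂ) ≠ 0 := by exact_mod_cast (Fact.out : p.Prime).ne_zero
  set A := ∑ a : ZMod p, (a.val : ℤ) * quadraticChar (ZMod p) a with hA
  set S := ∑ a : ZMod p, ((quadraticChar (ZMod p) a : ℤ) : ℝ) * Real.cot (Real.pi * a.val / p) with hS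
  let χ : MulChar (ZMod p) ℂ := (quadraticChar (ZMod p)).ringHomComp (Int.castRingHom ℂ)
  have hχa : ∀ a, χ a = ((quadraticChar (ZMod p) a : ℤ) : ℂ) := fun a => rfl
  have hq : χ.IsQuadratic := (quadraticChar_isQuadratic (ZMod p)).comp _
  have hm1 : χ (-1) = -1 := by
    rw [hχa, quadraticChar_neg_one hchar, ZMod.card, ZMod.χ₄_nat_three_mod_four h3]; simp
  have hne : χ ≠ 1 := by
    intro h
    rw [h, MulChar.one_apply (by simp)] at hm1
    norm_num at hm1
  set τ := gaussSum χ (ZMod.stdAddChar (N := p)) with hτ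
  have hτ2 : τ ^ 2 = -p := by
    rw [hτ, gaussSum_sq hne hq (ZMod.isPrimitive_stdAddChar p), hm1, ZMod.card]; ring
  have hshift : ∀ a : ZMod p, χ a * τ = ∑ b : ZMod p, χ b * ZMod.stdAddChar (b * a) := by
    intro a
    by_cases ha : a = 0
    · subst ha
      simp [hχa]
      exact (MulChar.sum_eq_zero_of_ne_one hne).symm
    · have := gaussSum_mulShift_eq χ (ZMod.stdAddChar (N := p)) (Units.mk0 a ha)
      rw [hq.inv] at this
      rw [hτ]
      simp only [Units.val_mk0] at this
      rw [← this, gaussSum]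
      exact sum_congr rfl fun b _ => by rw [AddChar.mulShift_apply, mul_comm a]
  have main : (A : ℂ) * τ = -(p * Complex.I / 2) * S := by
    calc (A : ℂ) * τ = ∑ a : ZMod p, (a.val : ℂ) * (χ a * τ) := by
          rw [hA]; push_cast; rw [sum_mul]
          exact sum_congr rfl fun a _ => by rw [hχa]; ring
      _ = ∑ b : ZMod p, χ b * ∑ a : ZMod p, (a.val : ℂ) * ZMod.stdAddChar (b * a) := by
          simp_rw [hshift, mul_sum]
          rw [sum_comm]
          exact sum_congr rfl fun b _ => sum_congr rfl fun a _ => by ring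
      _ = ∑ b : ZMod p, χ b * (p / 2 * (-Complex.I * (Real.cot (Real.pi * b.val / p) : ℝ) - 1)) := by
          refine sum_congr rfl fun b _ => ?_
          by_cases hb : b = 0
          · simp [hb, hχa]
          · rw [sum_val p b hb]
      _ = -(p * Complex.I / 2) * S - p / 2 * ∑ b : ZMod p, χ b := by
          rw [hS, Complex.ofReal_sum, mul_sum, mul_sum, ← sum_sub_distrib]
          refine sum_congr rfl fun b _ => ?_
          rw [hχa]
          rw [Complex.ofReal_mul, Complex.ofReal_intCast]; ring
      _ = _ := by rw [MulChar.sum_eq_zero_of_ne_one hne]; ring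
  have h2 : (A : ℂ) ^ 2 * τ ^ 2 = (-(p * Complex.I / 2) * S) ^ 2 := by rw [← main]; ring
  rw [hτ2] at h2
  have h4 : (A : ℂ) ^ 2 = p / 4 * (S : ℂ) ^ 2 := by
    apply mul_left_cancel₀ hp0
    have : (-(p * Complex.I / 2) * (S : ℂ)) ^ 2 = p ^ 2 * Complex.I ^ 2 / 4 * S ^ 2 := by ring
    rw [this, Complex.I_sq] at h2
    linear_combination -h2
  apply Complex.ofReal_injective
  push_cast
  exact h4

lemma cot_per (p : ℕ) (hp : 0 < p) (n : ℕ) :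
    Real.cot (Real.pi * n / p) = Real.cot (Real.pi * ((n : ZMod p).val) / p) := by
  rw [ZMod.val_natCast]
  conv_lhs => rw [← Nat.mod_add_div n p]
  have hp0 : (p : ℝ) ≠ 0 := by positivity
  have : Real.pi * ((n % p + p * (n / p) : ℕ) : ℝ) / p = Real.pi * ((n % p : ℕ) : ℝ) / p + ((n / p : ℕ) : ℝ) * Real.pi := by
    push_cast; field_simp
  rw [this, Real.cot_eq_cos_div_sin, Real.cot_eq_cos_div_sin, Real.cos_add_nat_mul_pi, Real.sin_add_nat_mul_pi,
    mul_div_mul_left _ _ (by positivity)]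

lemma cot_sum (p : ℕ) [Fact p.Prime] (h3 : p % 4 = 3) :
    2 * ∑ n ∈ Finset.Icc 1 ((p - 1) / 2), Real.cot (Real.pi * (n : ℝ) ^ 2 / p) =
    ∑ a : ZMod p, ((quadraticChar (ZMod p) a : ℤ) : ℝ) * Real.cot (Real.pi * a.val / p) := by
  have hchar : ringChar (ZMod p) ≠ 2 := by rw [ZMod.ringChar_zmod_n]; omega
  have hp : 0 < p := by omega
  have hp0 : (p : ℝ) ≠ 0 := by positivity
  set g : ZMod p → ℝ := fun a => Real.cot (Real.pi * a.val / p) with hg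
  have g0 : g 0 = 0 := by simp [hg, Real.cot_eq_cos_div_sin]
  have gneg : ∀ a, g (-a) = - g a := by
    intro a
    by_cases ha : a = 0
    · simp [ha, g0]
    · have : NeZero a := ⟨ha⟩
      simp only [hg]
      rw [ZMod.val_neg_of_ne_zero, Nat.cast_sub (ZMod.val_lt a).le]
      have : Real.pi * ((p : ℝ) - a.val) / p = Real.pi - Real.pi * a.val / p := by field_simp
      rw [this, Real.cot_eq_cos_div_sin, Real.cot_eq_cos_div_sin, Real.cos_pi_sub, Real.sin_pi_sub, neg_div]
  have gsum : ∑ a, g a = 0 := by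
    have := Equiv.sum_comp (Equiv.neg (ZMod p)) g
    simp only [Equiv.neg_apply, gneg, sum_neg_distrib] at this
    linarith
  have e1 : ∑ x : ZMod p, g (x ^ 2) = ∑ a : ZMod p, ((quadraticChar (ZMod p) a : ℤ) : ℝ) * g a := by
    rw [← sum_fiberwise (s := univ) (g := fun x : ZMod p => x ^ 2)]
    have : ∀ a : ZMod p, ∑ x ∈ univ.filter (fun x : ZMod p => x ^ 2 = a), g (x ^ 2) =
        (((quadraticChar (ZMod p) a : ℤ) : ℝ) + 1) * g a := by
      intro a
      rw [sum_congr rfl (g := fun _ => g a) (fun x hx => by rw [(mem_filter.1 hx).2]), sum_const, nsmul_eq_mul]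
      congr 1
      have := quadraticChar_card_sqrts hchar a
      rw [← Int.cast_one, ← Int.cast_add, ← this]
      rw [Int.cast_natCast]
      congr 2
      ext x; simp
    rw [sum_congr rfl fun a _ => this a]
    simp_rw [add_mul, sum_add_distrib, one_mul, gsum, add_zero]
  rw [← e1]
  have gn : ∀ n : ℕ, g ((n : ZMod p) ^ 2) = Real.cot (Real.pi * (n : ℝ) ^ 2 / p) := by
    intro n
    have := cot_per p hp (n ^ 2)
    push_cast at this
    rw [this]
  have e2 : ∑ x : ZMod p, g (x ^ 2) = ∑ n ∈ range p, g ((n : ZMod p) ^ 2) := by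
    refine sum_nbij' (fun a : ZMod p => a.val) (fun n : ℕ => (n : ZMod p)) ?_ ?_ ?_ ?_ ?_
    · intro a _; simpa using ZMod.val_lt a
    · intro n _; simp
    · intro a _; simp
    · intro n hn; exact ZMod.val_natCast_of_lt (by simpa using hn)
    · intro a _; simp
  rw [e2]
  have e3 : range p = insert 0 (Icc 1 ((p-1)/2) ∪ Icc ((p+1)/2) (p-1)) := by
    ext n; simp only [mem_range, mem_insert, mem_union, mem_Icc]; omega
  rw [e3, sum_insert (by simp; omega), sum_union (by
    rw [disjoint_left]; intro n; simp only [mem_Icc]; omega)]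
  have e4 : ∑ n ∈ Icc ((p+1)/2) (p-1), g ((n : ZMod p) ^ 2) = ∑ n ∈ Icc 1 ((p-1)/2), g ((n : ZMod p) ^ 2) := by
    refine sum_nbij' (fun n => p - n) (fun n => p - n) ?_ ?_ ?_ ?_ ?_
    · intro n; simp only [mem_Icc]; omega
    · intro n; simp only [mem_Icc]; omega
    · intro n; simp only [mem_Icc]; omega
    · intro n; simp only [mem_Icc]; omega
    · intro n hn
      rw [mem_Icc] at hn
      rw [Nat.cast_sub (by omega)]; simp
  rw [e4, sum_congr rfl fun n _ => gn n]
  simp [g0]; ring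

theorem C_odd_positive_integer (p : ℕ) (hp : p.Prime) (h3 : p % 4 = 3) (hgt : p > 3) :
    ∃ m : ℤ, C p = (m : ℝ) ∧ Odd m ∧ 0 < m ∧ (p : ℤ) ∣ m ∧ ¬ ((p : ℤ) ^ 2 ∣ m) := by
  have : Fact p.Prime := ⟨hp⟩
  obtain ⟨h, hA, hodd, hlt⟩ := A_facts p h3 hgt
  have hsq := A_sq p h3
  have hS := S_nonneg p h3
  rw [← cot_sum p h3] at hsq hS
  rw [hA] at hsq
  have hC0 : 0 ≤ C p := mul_nonneg (Real.sqrt_nonneg _) (by linarith)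
  have hC2 : C p ^ 2 = (((p : ℤ) * h : ℤ) : ℝ) ^ 2 := by
    rw [hsq, C, mul_pow, Real.sq_sqrt (by positivity)]; ring
  have hp0 : (0 : ℤ) < p := by exact_mod_cast hp.pos
  have hh0 : h ≠ 0 := by rintro rfl; simp at hodd
  have hpos : 0 < |h| := abs_pos.2 hh0
  refine ⟨p * |h|, ?_, ?_, by positivity, dvd_mul_right _ _, ?_⟩
  · rw [← abs_of_nonneg hC0, (sq_eq_sq_iff_abs_eq_abs _ _).1 hC2]
    push_cast
    rw [abs_mul, Nat.abs_cast]
  · apply Odd.mul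
    · rw [Int.odd_iff]; omega
    · exact odd_abs.2 hodd
  · rw [sq]
    intro hd
    have := Int.le_of_dvd hpos (Int.dvd_of_mul_dvd_mul_left hp0.ne' hd)
    omega
end

section
/- Let p be a prime with p ≡ 3 (mod 4). Then the class number h(−p) of the imaginary quadratic number field ℚ(√(−p)) is odd. -/
/-- In `ℤ[ω]` with `ω² - ω + (k+1) = 0`, `p = 4 * k + 3` prime, an ideal stable under
`ω ↦ 1 - ω` is principal. -/
theorem stable_ideal_principal {O : Type*} [CommRing O] [IsDomain O] [CharZero O]
    (p k : ℕ) (hp : p.Prime) (hk : p = 4 * k + 3) (ω : O)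
    (hω : ω ^ 2 = ω - (k + 1)) (hb : ∀ x : O, ∃ u v : ℤ, x = u + v * ω)
    (σ : O ≃+* O) (hσ : σ ω = 1 - ω) (J : Ideal O) (hJ : ∀ x ∈ J, σ x ∈ J) :
    ∃ g : O, J = Ideal.span {g} := by
  by_cases hJ0 : J = ⊥
  · exact ⟨0, by simp [hJ0]⟩
  -- the group of ω-coefficients
  let V : AddSubgroup ℤ :=
    { carrier := {v | ∃ u : ℤ, (u : O) + v * ω ∈ J}
      zero_mem' := ⟨0, by simp⟩
      add_mem' := by
        rintro a b ⟨u, hu⟩ ⟨w, hw⟩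
        refine ⟨u + w, ?_⟩
        have := J.add_mem hu hw
        push_cast
        convert this using 1
        ring
      neg_mem' := by
        rintro a ⟨u, hu⟩
        refine ⟨-u, ?_⟩
        have := J.neg_mem hu
        push_cast
        convert this using 1
        ring }
  obtain ⟨c, hc⟩ := Int.subgroup_cyclic V
  have hdvd : ∀ v u : ℤ, (u : O) + v * ω ∈ J → c ∣ v := by
    intro v u h
    have : v ∈ V := ⟨u, h⟩
    rw [hc, ← AddSubgroup.zmultiples_eq_closure, Int.mem_zmultiples_iff] at this
    exact this
  have hdvd' : ∀ v u : ℤ, (u : O) + v * ω ∈ J → c ∣ u := by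
    intro v u h
    have h1 := hdvd v u h
    have h2 : c ∣ u + v := by
      apply hdvd (u + v) (-v * (k + 1))
      have := J.mul_mem_left ω h
      convert this using 1
      push_cast
      linear_combination (-(v : O)) * hω
    exact (Int.dvd_add_left h1).mp h2
  have hcV : c ∈ V := by
    rw [hc, ← AddSubgroup.zmultiples_eq_closure]; exact AddSubgroup.mem_zmultiples c
  have hfac : ∀ x ∈ J, ∃ y, x = (c : O) * y := by
    intro x hx
    obtain ⟨u, v, rfl⟩ := hb x
    obtain ⟨a, ha⟩ := hdvd v u hx
    obtain ⟨b, hb⟩ := hdvd' v u hx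
    refine ⟨b + a * ω, ?_⟩
    rw [ha, hb]; push_cast; ring
  have hc0 : (c : O) ≠ 0 := by
    intro h
    apply hJ0
    rw [eq_bot_iff]
    intro x hx
    obtain ⟨y, hy⟩ := hfac x hx
    simp [hy, h]
  let J' : Ideal O := Submodule.comap (LinearMap.mulLeft O (c : O)) J
  have memJ' : ∀ y, y ∈ J' ↔ (c : O) * y ∈ J := fun y => Iff.rfl
  have hJJ' : J = Ideal.span {(c : O)} * J' := by
    ext x
    rw [Ideal.mem_span_singleton_mul]
    constructor
    · intro hx
      obtain ⟨y, hy⟩ := hfac x hx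
      exact ⟨y, by rw [memJ', ← hy]; exact hx, hy.symm⟩
    · rintro ⟨z, hz, rfl⟩
      exact hz
  have hJ's : ∀ x ∈ J', σ x ∈ J' := by
    intro x hx
    have := hJ _ hx
    simpa [memJ'] using this
  obtain ⟨b, hbJ⟩ : ∃ b : ℤ, (b : O) + ω ∈ J' := by
    obtain ⟨u, hu⟩ := hcV
    obtain ⟨b, rfl⟩ := hdvd' _ _ hu
    refine ⟨b, ?_⟩
    rw [memJ']
    convert hu using 1
    push_cast; ring
  have hθ : 2 * ω - 1 ∈ J' := by
    have := J'.sub_mem hbJ (hJ's _ hbJ)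
    rw [map_add, hσ, map_intCast] at this
    convert this using 1
    ring
  have hθ2 : (2 * ω - 1) ^ 2 = -(p : O) := by
    rw [hk]; push_cast; linear_combination 4 * hω
  have hpJ : (p : O) ∈ J' := by
    have := J'.neg_mem (J'.mul_mem_left (2 * ω - 1) hθ)
    convert this using 1
    linear_combination hθ2
  suffices ∃ g, J' = Ideal.span {g} by
    obtain ⟨g, hg⟩ := this
    exact ⟨c * g, by rw [hJJ', hg, Ideal.span_singleton_mul_span_singleton]⟩
  by_cases hle : J' ≤ Ideal.span {2 * ω - 1}
  · exact ⟨_, le_antisymm hle ((Ideal.span_singleton_le_iff_mem _).mpr hθ)⟩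
  refine ⟨1, ?_⟩
  rw [Ideal.span_singleton_one, Ideal.eq_top_iff_one]
  obtain ⟨x, hx, hxn⟩ := SetLike.not_le_iff_exists.mp hle
  obtain ⟨u, v, rfl⟩ := hb x
  have h2 : ((2 * u + v : ℤ) : O) ∈ J' := by
    have := J'.sub_mem (J'.mul_mem_left 2 hx) (J'.mul_mem_left (v : O) hθ)
    convert this using 1
    push_cast; ring
  have hnd : ¬ (p : ℤ) ∣ 2 * u + v := by
    rintro ⟨t, ht⟩
    apply hxn
    rw [Ideal.mem_span_singleton]
    have ht' : (2 : O) * u + v = p * t := by exact_mod_cast congrArg (Int.cast : ℤ → O) ht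
    have hp' : (p : O) = 4 * k + 3 := by rw [hk]; push_cast; ring
    -- x = p x - (2 * k + 1) * (2 * x)
    refine ⟨-(2 * ω - 1) * (u + v * ω) - (2 * k + 1) * (v - (2 * ω - 1) * t), ?_⟩
    linear_combination ((u + v * ω) - (2 * k + 1) * t) * hθ2 - (2 * k + 1) * ht' - (u + v * ω) * hp'
  have hcop : IsCoprime (p : ℤ) (2 * u + v) :=
    ((Nat.prime_iff_prime_int.mp hp).irreducible.coprime_iff_not_dvd).mpr hnd
  obtain ⟨r, s, hrs⟩ := hcop
  have h1 : (1 : O) = r * p + s * ((2 * u + v : ℤ) : O) := by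
    exact_mod_cast (congrArg (Int.cast : ℤ → O) hrs).symm
  rw [h1]
  exact J'.add_mem (J'.mul_mem_left _ hpJ) (J'.mul_mem_left _ h2)

open NumberField in
theorem ringOfIntegers_setup (p k : ℕ) (hp : p.Prime) (hk : p = 4 * k + 3)
    (K : Type) [Field K] [NumberField K]
    (hdeg : Module.finrank ℚ K = 2) (hroot : ∃ α : K, α ^ 2 = -(p : K)) :
    ∃ (ω : 𝓞 K) (σ : 𝓞 K ≃+* 𝓞 K), ω ^ 2 = ω - (k + 1) ∧
      (∀ x : 𝓞 K, ∃ u v : ℤ, x = u + v * ω) ∧ σ ω = 1 - ω := by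
  obtain ⟨α, hα⟩ := hroot
  have : Algebra.IsQuadraticExtension ℚ K := { finrank_eq_two' := hdeg }
  have hcard : Nat.card Gal(K/ℚ) = 2 := by rw [IsGalois.card_aut_eq_finrank, hdeg]
  obtain ⟨τ, hτ1, hτ⟩ : ∃ τ : Gal(K/ℚ), τ ≠ 1 ∧ ∀ g : Gal(K/ℚ), g = 1 ∨ g = τ := by
    obtain ⟨a, b, hab, huniv⟩ := Nat.card_eq_two_iff.mp hcard
    have hm : ∀ g : Gal(K/ℚ), g = a ∨ g = b := fun g => by
      have : g ∈ ({a, b} : Set _) := huniv ▸ Set.mem_univ g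
      simpa using this
    rcases hm 1 with h | h
    · exact ⟨b, h ▸ hab.symm, fun g => by simpa [h] using hm g⟩
    · exact ⟨a, h ▸ hab, fun g => by simpa [h, or_comm] using hm g⟩
  have hfix : ∀ x : K, τ x = x → ∃ q : ℚ, (q : K) = x := by
    intro x hx
    have : x ∈ (⊥ : IntermediateField ℚ K) := by
      rw [IsGalois.mem_bot_iff_fixed]
      intro g
      rcases hτ g with rfl | rfl
      · rfl
      · exact hx
    obtain ⟨q, hq⟩ := IntermediateField.mem_bot.mp this
    exact ⟨q, by simpa using hq⟩
  have hinv : ∀ x, τ (τ x) = x := by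
    intro x
    rcases hτ (τ * τ) with h | h
    · exact congrArg (fun g : Gal(K/ℚ) => g x) h
    · exact absurd (mul_eq_left.mp h) hτ1
  have hp0 : 0 < p := hp.pos
  have hα0 : α ≠ 0 := by
    rintro rfl
    have : (p : K) = 0 := by simpa using hα.symm
    exact hp.ne_zero (by exact_mod_cast this)
  have hτα : τ α = -α := by
    have h : τ α ^ 2 = α ^ 2 := by rw [← map_pow, hα]; simp
    rcases sq_eq_sq_iff_eq_or_eq_neg.mp h with h | h
    · obtain ⟨q, hq⟩ := hfix α h
      rw [← hq] at hα
      have h1 : q ^ 2 = -(p : ℚ) := by exact_mod_cast hα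
      have h2 : (0 : ℚ) < p := by exact_mod_cast hp0
      nlinarith [sq_nonneg q]
    · exact h
  -- integral rationals
  have ratInt : ∀ q : ℚ, IsIntegral ℤ (q : K) → ∃ n : ℤ, (n : ℚ) = q := by
    intro q hq
    have : IsIntegral ℤ q := by
      rw [← isIntegral_algebraMap_iff (B := K) (algebraMap ℚ K).injective]
      simpa using hq
    obtain ⟨n, hn⟩ := IsIntegrallyClosed.isIntegral_iff.mp this
    exact ⟨n, by simpa using hn⟩
  have hωK : ((1 + α) / 2) ^ 2 = (1 + α) / 2 - ((k : K) + 1) := by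
    have : (p : K) = 4 * k + 3 := by rw [hk]; push_cast; ring
    rw [this] at hα
    field_simp
    linear_combination hα
  have hωint : IsIntegral ℤ ((1 + α) / 2) := by
    refine ⟨Polynomial.X ^ 2 - Polynomial.X + Polynomial.C ((k : ℤ) + 1), ?_, ?_⟩
    · monicity!
    · simp [Polynomial.eval₂_add, Polynomial.eval₂_sub, hωK]
  let ω : 𝓞 K := ⟨(1 + α) / 2, hωint⟩
  have hωc : algebraMap (𝓞 K) K ω = (1 + α) / 2 := rfl
  have hinj := FaithfulSMul.algebraMap_injective (𝓞 K) K
  refine ⟨ω, RingOfIntegers.mapRingEquiv τ.toRingEquiv, ?_, ?_, ?_⟩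
  · apply hinj
    simp only [map_pow, map_sub, map_add, map_natCast, map_one, hωc]
    exact hωK
  · intro x
    have hxi : IsIntegral ℤ (x : K) := x.isIntegral_coe
    have hτi : ∀ y : K, IsIntegral ℤ y → IsIntegral ℤ (τ y) := fun y hy =>
      hy.map (τ.toAlgHom.restrictScalars ℤ)
    obtain ⟨q, hq⟩ : ∃ q : ℚ, (q : K) = ((x : K) - τ x) / α := by
      apply hfix
      rw [map_div₀, map_sub, hinv, hτα]
      field_simp
      ring
    have hq' : (x : K) - τ x = q * α := by rw [hq]; field_simp
    obtain ⟨n, hn⟩ : ∃ n : ℤ, (n : ℚ) = -p * q ^ 2 := by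
      apply ratInt
      have h := (hxi.sub (hτi _ hxi)).pow 2
      rw [hq'] at h
      have he : ((-p * q ^ 2 : ℚ) : K) = (q * α) ^ 2 := by
        push_cast
        linear_combination (-((q : K) ^ 2)) * hα
      rw [he]; exact h
    obtain ⟨v, hv⟩ : ∃ v : ℤ, (v : ℚ) = q := by
      -- (p q)^2 = - p n, so p q integral, p | p q
      obtain ⟨w, hw⟩ : ∃ w : ℤ, (w : ℚ) = p * q := by
        have : IsIntegral ℤ ((p : ℚ) * q) := by
          apply IsIntegral.of_pow (n := 2) (by norm_num)
          have h : ((p : ℚ) * q) ^ 2 = ((-(p : ℤ) * n : ℤ) : ℚ) := by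
            push_cast; rw [hn]; ring
          rw [h]
          exact isIntegral_algebraMap (R := ℤ) (A := ℚ) (x := -(p : ℤ) * n)
        obtain ⟨w, hw⟩ := IsIntegrallyClosed.isIntegral_iff.mp this
        exact ⟨w, by simpa using hw⟩
      have hw2 : w ^ 2 = p * (-n) := by
        have : ((w ^ 2 : ℤ) : ℚ) = ((p * (-n) : ℤ) : ℚ) := by
          push_cast; rw [hw, hn]; ring
        exact_mod_cast this
      obtain ⟨t, ht⟩ := (Nat.prime_iff_prime_int.mp hp).dvd_of_dvd_pow (Dvd.intro _ hw2.symm)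
      refine ⟨t, ?_⟩
      rw [ht] at hw
      push_cast at hw
      have : (p : ℚ) ≠ 0 := by exact_mod_cast hp.ne_zero
      exact mul_left_cancel₀ this hw
    obtain ⟨r, hr⟩ : ∃ r : ℚ, (r : K) = x - v * ((1 + α) / 2) := by
      apply hfix
      have hqv : (q : K) = v := by rw [← hv]; simp
      rw [hqv] at hq'
      rw [map_sub, map_mul, map_intCast, map_div₀, map_add, map_one, hτα, map_ofNat]
      linear_combination -hq'
    obtain ⟨u, hu⟩ := ratInt r (by
      rw [hr]
      exact RingOfIntegers.isIntegral_coe (x - (v : 𝓞 K) * ω))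
    refine ⟨u, v, ?_⟩
    apply hinj
    have hru : (r : K) = u := by rw [← hu]; simp
    simp only [map_add, map_mul, map_intCast, hωc]
    rw [← hru, hr]; ring
  · apply hinj
    change τ ((1 + α) / 2) = algebraMap (𝓞 K) K (1 - ω)
    rw [map_sub, map_one (algebraMap (𝓞 K) K), hωc, map_div₀, map_add, map_one, hτα, map_ofNat]
    field_simp
    ring

open NumberField in
theorem classNumber_odd (p : ℕ) (hp : p.Prime) (h3 : p % 4 = 3)
    (K : Type) [Field K] [NumberField K]
    (hdeg : Module.finrank ℚ K = 2) (hroot : ∃ α : K, α ^ 2 = -(p : K)) :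
    Odd (NumberField.classNumber K) := by
  obtain ⟨k, hk⟩ : ∃ k, p = 4 * k + 3 := ⟨p / 4, by omega⟩
  obtain ⟨ω, σ, hω, hb, hσ⟩ := ringOfIntegers_setup p k hp hk K hdeg hroot
  rw [← Nat.not_even_iff_odd]
  intro hev
  obtain ⟨C, hC⟩ : ∃ C : ClassGroup (𝓞 K), orderOf C = 2 := by
    have : Fact (Nat.Prime 2) := ⟨Nat.prime_two⟩
    exact exists_prime_orderOf_dvd_card 2 hev.two_dvd
  obtain ⟨⟨I, hI⟩, rfl⟩ := ClassGroup.mk0_surjective C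
  have hI0 : I ≠ 0 := nonZeroDivisors.ne_zero hI
  have hnp : ¬ I.IsPrincipal := by
    intro h
    rw [← ClassGroup.mk0_eq_one_iff hI, ← orderOf_eq_one_iff] at h
    omega
  have hsq : (I ^ 2).IsPrincipal := by
    have h := pow_orderOf_eq_one (ClassGroup.mk0 ⟨I, hI⟩)
    rw [hC, ← map_pow] at h
    exact (ClassGroup.mk0_eq_one_iff (pow_mem hI 2)).mp h
  apply hnp
  obtain ⟨δ₀, hδ₀⟩ := hsq
  set n : ℕ := Ideal.absNorm I with hn
  have hn0 : n ≠ 0 := by rw [hn, Ne, Ideal.absNorm_eq_zero_iff]; exact hI0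
  have hσσ : ∀ x, σ (σ x) = x := by
    intro x
    obtain ⟨u, v, rfl⟩ := hb x
    simp [hσ]
  -- choose the sign
  obtain ⟨δ, hδ, hδn⟩ : ∃ δ : 𝓞 K, I ^ 2 = Ideal.span {δ} ∧ δ + n ≠ 0 := by
    by_cases h : δ₀ + n = 0
    · refine ⟨-δ₀, by rw [Ideal.span_singleton_neg]; exact hδ₀, ?_⟩
      rw [eq_neg_of_add_eq_zero_left h, neg_neg]
      exact_mod_cast (by omega : n + n ≠ 0)
    · exact ⟨δ₀, hδ₀, h⟩
  have hnormform : ∀ x : 𝓞 K, ∃ m : ℕ, x * σ x = m := by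
    intro x
    obtain ⟨u, v, rfl⟩ := hb x
    have hnn : 0 ≤ u ^ 2 + u * v + (k + 1) * v ^ 2 := by
      nlinarith [sq_nonneg (2 * u + v), sq_nonneg v, mul_nonneg (Int.natCast_nonneg k) (sq_nonneg v)]
    obtain ⟨m, hm⟩ := Int.eq_ofNat_of_zero_le hnn
    refine ⟨m, ?_⟩
    have hm' : (m : 𝓞 K) = u ^ 2 + u * v + (k + 1) * v ^ 2 := by
      exact_mod_cast (congrArg (Int.cast : ℤ → 𝓞 K) hm).symm
    rw [hm', map_add, map_mul, map_intCast, map_intCast, hσ]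
    linear_combination (-(v : 𝓞 K) ^ 2) * hω
  have hNδ : Ideal.absNorm (Ideal.span {δ}) = n ^ 2 := by rw [← hδ, map_pow]
  have hNσδ : Ideal.absNorm (Ideal.span {σ δ}) = n ^ 2 := by
    rw [← hNδ, Ideal.absNorm_span_singleton, Ideal.absNorm_span_singleton]
    congr 1
    exact Algebra.norm_eq_of_algEquiv (σ.toIntAlgEquiv) δ
  have hprod : δ * σ δ = (n : 𝓞 K) ^ 2 := by
    obtain ⟨m, hm⟩ := hnormform δ
    have h1 : Ideal.absNorm (Ideal.span {(m : 𝓞 K)}) = n ^ 2 * n ^ 2 := by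
      rw [← hm, ← Ideal.span_singleton_mul_span_singleton, map_mul, hNδ, hNσδ]
    rw [Ideal.absNorm_span_natCast, RingOfIntegers.rank, hdeg] at h1
    have h2 : m = n ^ 2 := by
      have : m ^ 2 = (n ^ 2) ^ 2 := by rw [h1]; ring
      exact Nat.pow_left_injective two_ne_zero this
    rw [hm, h2]; push_cast; rfl
  set γ := δ + n with hγ
  have hσγ0 : σ γ ≠ 0 := by simpa using hδn
  obtain ⟨m, hm⟩ := hnormform γ
  set J : Ideal (𝓞 K) := Ideal.span {σ γ} * I with hJ
  have hJ2 : J ^ 2 = Ideal.span {((n * m : ℕ) : 𝓞 K)} := by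
    rw [hJ, mul_pow, hδ, Ideal.span_singleton_pow, Ideal.span_singleton_mul_span_singleton]
    congr 2
    push_cast
    rw [← hm, hγ, map_add, map_natCast]
    linear_combination (σ δ + n) * hprod
  have hJσ : Ideal.map σ J = J := by
    have h : (Ideal.map σ J) ^ 2 = J ^ 2 := by
      rw [← Ideal.map_pow, hJ2, Ideal.map_span, Set.image_singleton, map_natCast]
    exact (pow_left_inj two_ne_zero).mp h
  obtain ⟨g, hg⟩ := stable_ideal_principal p k hp hk ω hω hb σ hσ J (fun x hx => by
    rw [← hJσ]; exact Ideal.mem_map_of_mem σ hx)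
  have hgJ : g ∈ J := by rw [hg]; exact Ideal.mem_span_singleton_self g
  obtain ⟨z, hz, hzg⟩ := Ideal.mem_span_singleton_mul.mp hgJ
  refine ⟨z, ?_⟩
  have : Ideal.span {σ γ} * I = Ideal.span {σ γ} * Ideal.span {z} := by
    rw [← hJ, hg, Ideal.span_singleton_mul_span_singleton, hzg]
  exact mul_left_cancel₀ (by simpa using hδn) this
end

section
/- Let p be a prime with p ≡ 3 (mod 4). If p ≡ 3 (mod 8), then the number of even quadratic residues mod p lying strictly between 0 and p/2 equals (p−3)/8. If p ≡ 7 (mod 8), then the number of even quadratic residues mod p lying strictly between p/2 and p equals (p+1)/8. -/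
theorem aux_split (f : ℕ → ℤ) (n : ℕ) :
    ∑ i ∈ Finset.range (2 * n), f i =
      ∑ i ∈ Finset.range n, f (2 * i) + ∑ i ∈ Finset.range n, f (2 * i + 1) := by
  induction n with
  | zero => simp
  | succ n ih =>
    rw [show 2 * (n + 1) = 2 * n + 1 + 1 by ring, Finset.sum_range_succ, Finset.sum_range_succ, ih,
      Finset.sum_range_succ, Finset.sum_range_succ]
    ring

theorem aux_key (f : ℕ → ℤ) (m : ℕ) (c : ℤ) (h2 : ∀ i, f (2 * i) = c * f i)
    (hneg : ∀ i j, i + j = 4 * m + 3 → f i = - f j) :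
    ∑ i ∈ Finset.range (m + 1), f i + ∑ i ∈ Finset.range (m + 1), f (m + 1 + i) =
      c * (∑ i ∈ Finset.range (m + 1), f i - ∑ i ∈ Finset.range (m + 1), f (m + 1 + i)) := by
  have h := aux_split f (m + 1)
  rw [two_mul, Finset.sum_range_add, ← Finset.sum_range_reflect (fun i => f (2 * i + 1))] at h
  rw [h, mul_sub, sub_eq_add_neg, Finset.mul_sum, Finset.mul_sum, ← Finset.sum_neg_distrib]
  congr 1
  · exact Finset.sum_congr rfl fun i _ => h2 i
  · refine Finset.sum_congr rfl fun i hi => ?_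
    have := Finset.mem_range.1 hi
    rw [← h2]
    exact hneg _ _ (by omega)

theorem aux_count (s : Finset ℕ) (g : ℕ → ℤ) (hg : ∀ i ∈ s, g i = 1 ∨ g i = -1) :
    2 * ((s.filter (fun i => g i = 1)).card : ℤ) = s.card + ∑ i ∈ s, g i := by
  rw [Finset.card_filter, Finset.card_eq_sum_ones]
  push_cast
  rw [← Finset.sum_add_distrib, Finset.mul_sum]
  refine Finset.sum_congr rfl fun i hi => ?_
  rcases hg i hi with h | h <;> simp [h]

theorem aux_qr (p : ℕ) [Fact p.Prime] (k : ℕ) (hk : 1 ≤ k) (hk' : k < p) :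
    (∃ x ∈ Finset.range p, x * x % p = k % p) ↔ legendreSym p k = 1 := by
  have h0 : ((k : ℤ) : ZMod p) ≠ 0 := by
    rw [Int.cast_natCast, Ne, ZMod.natCast_eq_zero_iff]
    exact fun h => absurd (Nat.le_of_dvd hk h) (by omega)
  rw [legendreSym.eq_one_iff p h0]
  constructor
  · rintro ⟨x, _, hx⟩
    refine ⟨(x : ZMod p), ?_⟩
    have : ((x * x : ℕ) : ZMod p) = (k : ℕ) := (ZMod.natCast_eq_natCast_iff' _ _ _).2 hx
    push_cast at this ⊢
    exact this.symm
  · rintro ⟨y, hy⟩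
    refine ⟨y.val, Finset.mem_range.2 (ZMod.val_lt y), ?_⟩
    apply (ZMod.natCast_eq_natCast_iff' _ _ _).1
    push_cast at hy ⊢
    rw [ZMod.natCast_zmod_val]
    exact hy.symm

theorem aux_pm (p : ℕ) [Fact p.Prime] (k : ℕ) (hk : 1 ≤ k) (hk' : k < p) :
    legendreSym p k = 1 ∨ legendreSym p k = -1 := by
  apply legendreSym.eq_one_or_neg_one
  rw [Int.cast_natCast, Ne, ZMod.natCast_eq_zero_iff]
  exact fun h => absurd (Nat.le_of_dvd hk h) (by omega)

theorem count_even_qr_in_halves (p : ℕ) (hp : p.Prime) (h3 : p % 4 = 3) :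
    (p % 8 = 3 →
      ((Finset.Icc 1 (p - 1)).filter
        (fun k => Even k ∧ 2 * k < p ∧ ∃ x ∈ Finset.range p, x * x % p = k % p)).card
        = (p - 3) / 8) ∧
    (p % 8 = 7 →
      ((Finset.Icc 1 (p - 1)).filter
        (fun k => Even k ∧ p < 2 * k ∧ ∃ x ∈ Finset.range p, x * x % p = k % p)).card
        = (p + 1) / 8) := by
  haveI : Fact p.Prime := ⟨hp⟩
  obtain ⟨m, hm⟩ : ∃ m, p = 4 * m + 3 := ⟨p / 4, by omega⟩
  have hp2 : p ≠ 2 := by omega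
  have hneg1 : legendreSym p (-1) = -1 := by
    rw [legendreSym.at_neg_one hp2, ZMod.χ₄_nat_three_mod_four h3]
  have h2 : ∀ i : ℕ, legendreSym p ((2 * i : ℕ) : ℤ) = legendreSym p 2 * legendreSym p (i : ℤ) := by
    intro i
    push_cast
    rw [legendreSym.mul]
  have key := aux_key (fun k => legendreSym p (k : ℤ)) m (legendreSym p 2) h2 (by
    intro i j hij
    have : legendreSym p (i : ℤ) = legendreSym p (-1 * (j : ℤ)) := by
      rw [legendreSym.mod p (i : ℤ), legendreSym.mod p (-1 * (j : ℤ))]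
      congr 1
      apply Int.ModEq.symm
      apply (Int.modEq_iff_dvd).2
      exact ⟨1, by omega⟩
    show legendreSym p (i : ℤ) = - legendreSym p (j : ℤ)
    rw [this, legendreSym.mul, hneg1]; ring)
  constructor
  · intro h8
    have hc : legendreSym p 2 = -1 := by
      rw [legendreSym.at_two hp2, ZMod.χ₈_nat_mod_eight, h8]; decide
    rw [hc] at key
    have hA : ∑ i ∈ Finset.range (m + 1), legendreSym p (i : ℤ) = 0 := by linarith
    have hs : (Finset.Icc 1 (p - 1)).filter
        (fun k => Even k ∧ 2 * k < p ∧ ∃ x ∈ Finset.range p, x * x % p = k % p) =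
        ((Finset.Icc 1 m).filter (fun i => legendreSym p ((2 * i : ℕ) : ℤ) = 1)).image
          (fun i => 2 * i) := by
      ext k
      simp only [Finset.mem_filter, Finset.mem_image, Finset.mem_Icc]
      constructor
      · rintro ⟨⟨a, b⟩, ⟨j, hj⟩, d, e⟩
        rw [aux_qr p k a (by omega)] at e
        have hk : k = 2 * j := by omega
        subst hk
        exact ⟨j, ⟨⟨by omega, by omega⟩, e⟩, rfl⟩
      · rintro ⟨j, ⟨⟨a, b⟩, e⟩, rfl⟩
        exact ⟨⟨by omega, by omega⟩, even_two_mul j, by omega,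
          (aux_qr p (2 * j) (by omega) (by omega)).2 e⟩
    rw [hs, Finset.card_image_of_injective _ (fun a b h => by simpa using h)]
    have hcount := aux_count (Finset.Icc 1 m) (fun i => legendreSym p ((2 * i : ℕ) : ℤ)) (by
      intro i hi
      have := Finset.mem_Icc.1 hi
      exact aux_pm p (2 * i) (by omega) (by omega))
    have hz : ∑ i ∈ Finset.Icc 1 m, legendreSym p ((2 * i : ℕ) : ℤ) = 0 := by
      have hr : Finset.range (m + 1) = insert 0 (Finset.Icc 1 m) := by
        ext i; simp only [Finset.mem_range, Finset.mem_insert, Finset.mem_Icc]; omega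
      rw [hr, Finset.sum_insert (by simp)] at hA
      simp only [Nat.cast_zero, legendreSym.at_zero, zero_add] at hA
      simp only [h2]
      rw [← Finset.mul_sum, hA, mul_zero]
    try simp only at hcount
    rw [hz, Nat.card_Icc] at hcount
    omega
  · intro h8
    have hc : legendreSym p 2 = 1 := by
      rw [legendreSym.at_two hp2, ZMod.χ₈_nat_mod_eight, h8]; decide
    rw [hc] at key
    have hB : ∑ i ∈ Finset.range (m + 1), legendreSym p ((m + 1 + i : ℕ) : ℤ) = 0 := by linarith
    have hs : (Finset.Icc 1 (p - 1)).filter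
        (fun k => Even k ∧ p < 2 * k ∧ ∃ x ∈ Finset.range p, x * x % p = k % p) =
        ((Finset.range (m + 1)).filter
          (fun i => legendreSym p ((2 * (m + 1 + i) : ℕ) : ℤ) = 1)).image
          (fun i => 2 * (m + 1 + i)) := by
      ext k
      simp only [Finset.mem_filter, Finset.mem_image, Finset.mem_Icc, Finset.mem_range (n := m + 1)]
      constructor
      · rintro ⟨⟨a, b⟩, ⟨j, hj⟩, d, e⟩
        rw [aux_qr p k a (by omega)] at e
        obtain ⟨i, hi⟩ : ∃ i, j = m + 1 + i := ⟨j - (m + 1), by omega⟩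
        have hk : k = 2 * (m + 1 + i) := by omega
        subst hk
        exact ⟨i, ⟨by omega, e⟩, rfl⟩
      · rintro ⟨j, ⟨a, e⟩, rfl⟩
        exact ⟨⟨by omega, by omega⟩, even_two_mul _, by omega,
          (aux_qr p (2 * (m + 1 + j)) (by omega) (by omega)).2 e⟩
    rw [hs, Finset.card_image_of_injective _ (fun a b h => by simpa using h)]
    have hcount := aux_count (Finset.range (m + 1))
      (fun i => legendreSym p ((2 * (m + 1 + i) : ℕ) : ℤ)) (by
      intro i hi
      have := Finset.mem_range.1 hi
      exact aux_pm p (2 * (m + 1 + i)) (by omega) (by omega))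
    have hz : ∑ i ∈ Finset.range (m + 1), legendreSym p ((2 * (m + 1 + i) : ℕ) : ℤ) = 0 := by
      simp only [h2]
      rw [← Finset.mul_sum, hB, mul_zero]
    try simp only at hcount
    rw [hz, Finset.card_range] at hcount
    omega
end
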